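/- arXiv:1504.03037 — 2 statements merged into one kernel-verified Lean document; each statement's English description precedes it below -/
import Mathlib

section
/- Let A be a (possibly uncountable) CLO whose complete theory is ℵ₀-categorical, and let B ⊆ A be a nonempty convex subset regarded as an L_κ-structure with the induced order and unary predicates. Then the complete theory of B is ℵ₀-categorical. -/
open FirstOrder Language Set

/-- Relation symbols of the language `L_κ` of colored linear orders:
a binary `<` and a unary color predicate for each `i : ι`. -/
inductive CLORel (ι : Type) : ℕ → Type
  | lt : CLORel ι 2
  | color (i : ι) : CLORel ι 1

/-- The language `L_κ`, where the colors are indexed by `ι`. -/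
def CLOLang (ι : Type) : Language :=
  ⟨fun _ => Empty, CLORel ι⟩

/-- Interpretation of the relation symbols on a linear order `M` with colors `c`. -/
def cloRelMap {ι M : Type} [LinearOrder M] (c : ι → Set M) :
    ∀ {n}, CLORel ι n → (Fin n → M) → Prop
  | _, .lt => fun v => v 0 < v 1
  | _, .color i => fun v => v 0 ∈ c i

/-- The canonical `L_κ`-structure (a colored linear order, CLO) on a linear
order `M` whose colors are given by `c : ι → Set M`. -/
def CLOStr (ι M : Type) [LinearOrder M] (c : ι → Set M) : (CLOLang ι).Structure M where
  funMap := fun f => Empty.elim f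
  RelMap := cloRelMap c

/-- Satisfaction of an `L_κ`-formula in the CLO `(M, <, c)`. -/
def Sat {ι : Type} (M : Type) [LinearOrder M] (c : ι → Set M) {α : Type}
    (φ : (CLOLang ι).Formula α) (v : α → M) : Prop :=
  letI := CLOStr ι M c
  φ.Realize v

/-- The induced colors on a subset of a CLO. -/
def subColor {ι M : Type} (c : ι → Set M) (s : Set M) : ι → Set s :=
  fun i => {x | (x : M) ∈ c i}

/-- Elementary equivalence of CLOs. -/
def CLOEquiv (ι : Type) (M : Type) [LinearOrder M] (cM : ι → Set M)
    (N : Type) [LinearOrder N] (cN : ι → Set N) : Prop :=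
  letI := CLOStr ι M cM
  letI := CLOStr ι N cN
  M ≅[CLOLang ι] N

/-- Isomorphism of CLOs (as `L_κ`-structures). -/
def CLOIso (ι : Type) (M : Type) [LinearOrder M] (cM : ι → Set M)
    (N : Type) [LinearOrder N] (cN : ι → Set N) : Prop :=
  letI := CLOStr ι M cM
  letI := CLOStr ι N cN
  Nonempty (M ≃[CLOLang ι] N)

/-- The complete theory of a CLO. -/
def CLOTheory (ι : Type) (M : Type) [LinearOrder M] (c : ι → Set M) : (CLOLang ι).Theory :=
  letI := CLOStr ι M c
  (CLOLang ι).completeTheory M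

/-- The induced colors on a lexicographic sum `Σₗ i, A i` of CLOs. -/
def sigmaColor {ι I : Type} {A : I → Type} (c : ∀ i, ι → Set (A i)) :
    ι → Set (Σₗ i, A i) :=
  fun k => {x | (ofLex x).2 ∈ c (ofLex x).1 k}

/-- The induced colors on a two-term lexicographic sum `α ⊕ₗ β` of CLOs. -/
def sumColor2 {ι α β : Type} (ca : ι → Set α) (cb : ι → Set β) : ι → Set (α ⊕ₗ β) :=
  fun k => {x | Sum.elim (· ∈ ca k) (· ∈ cb k) (ofLex x)}

/-- The set defined by a parameter-free formula in one variable in a CLO. -/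
def FmlSet (ι : Type) (M : Type) [LinearOrder M] (c : ι → Set M)
    (φ : (CLOLang ι).Formula Unit) : Set M :=
  {x | Sat M c φ fun _ => x}

/-- A CLO is self-additive if it has more than one point and its only
convex parameter-free-definable subsets are `∅` and the whole order. -/
def SelfAdditive (ι : Type) (M : Type) [LinearOrder M] (c : ι → Set M) : Prop :=
  Nontrivial M ∧
    ∀ φ : (CLOLang ι).Formula Unit, (FmlSet ι M c φ).OrdConnected →
      FmlSet ι M c φ = ∅ ∨ FmlSet ι M c φ = Set.univ

/-- `a ∼ b`: some set definable with parameter `a` is convex, bounded above and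
below, and contains both `a` and `b`. -/
def SimRel (ι : Type) {M : Type} [LinearOrder M] (c : ι → Set M) (a b : M) : Prop :=
  ∃ φ : (CLOLang ι).Formula (Unit ⊕ Unit),
    (Set.OrdConnected {x | Sat M c φ (Sum.elim (fun _ => x) fun _ => a)}) ∧
    (∃ u : M, ∀ z ∈ {x | Sat M c φ (Sum.elim (fun _ => x) fun _ => a)}, z < u) ∧
    (∃ l : M, ∀ z ∈ {x | Sat M c φ (Sum.elim (fun _ => x) fun _ => a)}, l < z) ∧
    a ∈ {x | Sat M c φ (Sum.elim (fun _ => x) fun _ => a)} ∧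
    b ∈ {x | Sat M c φ (Sum.elim (fun _ => x) fun _ => a)}

/-- `f : M → N` is an elementary map of CLOs. -/
def IsElemMap (ι : Type) {M N : Type} [LinearOrder M] [LinearOrder N]
    (cM : ι → Set M) (cN : ι → Set N) (f : M → N) : Prop :=
  ∀ (k : ℕ) (φ : (CLOLang ι).Formula (Fin k)) (v : Fin k → M),
    Sat M cM φ v ↔ Sat N cN φ (f ∘ v)

/-- A subset of a CLO, with its induced structure, is an elementary substructure. -/
def IsElemSubset (ι : Type) (B : Type) [LinearOrder B] (cB : ι → Set B) (s : Set B) : Prop :=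
  IsElemMap ι (subColor cB s) cB (Subtype.val : s → B)

/-- A complete `L_κ`-theory is ℵ₀-categorical: any two at-most-countable CLO
models of it are isomorphic.  (Finite and empty models are allowed.) -/
def Aleph0CatTheory (ι : Type) (T : (CLOLang ι).Theory) : Prop :=
  ∀ (N₁ N₂ : Type) (i₁ : LinearOrder N₁) (i₂ : LinearOrder N₂)
    (c₁ : ι → Set N₁) (c₂ : ι → Set N₂),
    Countable N₁ → Countable N₂ →
    (letI := i₁; CLOTheory ι N₁ c₁) = T → (letI := i₂; CLOTheory ι N₂ c₂) = T →
    (letI := i₁; letI := i₂; CLOIso ι N₁ c₁ N₂ c₂)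

/-- `φ` is a convex formula for the complete theory of the CLO `(M₀, c₀)`:
its realizations in every model of that theory form a convex set. -/
def ConvexFml (ι : Type) (M₀ : Type) [LinearOrder M₀] (c₀ : ι → Set M₀)
    (φ : (CLOLang ι).Formula Unit) : Prop :=
  ∀ (B : Type) (iB : LinearOrder B) (cB : ι → Set B),
    (letI := iB; CLOEquiv ι B cB M₀ c₀) → (letI := iB; Set.OrdConnected (FmlSet ι B cB φ))

/-- The set of common realizations of a set of one-variable formulas in a CLO. -/
def TypeSet (ι : Type) (M : Type) [LinearOrder M] (c : ι → Set M)
    (Φ : Set ((CLOLang ι).Formula Unit)) : Set M :=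
  {x | ∀ φ ∈ Φ, Sat M c φ fun _ => x}

/-- A set of one-variable formulas is consistent with the complete theory of
`(M₀, c₀)`: it is realized in some model of that theory. -/
def TypeConsistent (ι : Type) (M₀ : Type) [LinearOrder M₀] (c₀ : ι → Set M₀)
    (Φ : Set ((CLOLang ι).Formula Unit)) : Prop :=
  ∃ (B : Type) (iB : LinearOrder B) (cB : ι → Set B),
    (letI := iB; CLOEquiv ι B cB M₀ c₀) ∧ (letI := iB; ∃ b : B, b ∈ TypeSet ι B cB Φ)

/-- `Φ` is a convex type of the complete theory of `(M₀, c₀)`: a maximal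
consistent set of convex formulas over `∅`.  `IT(T)` is the set of all such. -/
def IsConvexType (ι : Type) (M₀ : Type) [LinearOrder M₀] (c₀ : ι → Set M₀)
    (Φ : Set ((CLOLang ι).Formula Unit)) : Prop :=
  (∀ φ ∈ Φ, ConvexFml ι M₀ c₀ φ) ∧ TypeConsistent ι M₀ c₀ Φ ∧
    ∀ ψ, ConvexFml ι M₀ c₀ ψ → TypeConsistent ι M₀ c₀ (insert ψ Φ) → ψ ∈ Φ

/-- A convex type is isolated if it contains a convex formula contained in no
other convex type. -/
def IsolatedCT (ι : Type) (M₀ : Type) [LinearOrder M₀] (c₀ : ι → Set M₀)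
    (Φ : Set ((CLOLang ι).Formula Unit)) : Prop :=
  ∃ φ ∈ Φ, ConvexFml ι M₀ c₀ φ ∧
    ∀ Ψ, IsConvexType ι M₀ c₀ Ψ → φ ∈ Ψ → Ψ = Φ

/-- A CLO is ℵ₀-saturated: every finitely-satisfiable set of formulas in one
variable over finitely many parameters is realized. -/
def Aleph0Saturated (ι : Type) (S : Type) [LinearOrder S] (cS : ι → Set S) : Prop :=
  ∀ (m : ℕ) (a : Fin m → S) (p : Set ((CLOLang ι).Formula (Unit ⊕ Fin m))),
    (∀ q : Finset ((CLOLang ι).Formula (Unit ⊕ Fin m)), ↑q ⊆ p →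
      ∃ x : S, ∀ φ ∈ q, Sat S cS φ (Sum.elim (fun _ => x) a)) →
    ∃ x : S, ∀ φ ∈ p, Sat S cS φ (Sum.elim (fun _ => x) a)

/-- A CLO is strongly ℵ₀-homogeneous: finite tuples with the same complete type
are conjugate under an automorphism. -/
def StronglyAleph0Homogeneous (ι : Type) (S : Type) [LinearOrder S] (cS : ι → Set S) : Prop :=
  ∀ (m : ℕ) (a b : Fin m → S),
    (∀ φ : (CLOLang ι).Formula (Fin m), Sat S cS φ a ↔ Sat S cS φ b) →
    ∃ g : S ≃ S, (∀ x y : S, x < y ↔ g x < g y) ∧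
      (∀ (k : ι) (x : S), x ∈ cS k ↔ g x ∈ cS k) ∧ ∀ i, g (a i) = b i

/-- Sufficiently saturated: ℵ₀-saturated and strongly ℵ₀-homogeneous. -/
def SuffSaturated (ι : Type) (S : Type) [LinearOrder S] (cS : ι → Set S) : Prop :=
  Aleph0Saturated ι S cS ∧ StronglyAleph0Homogeneous ι S cS

/-- The complete theory of `(M₀, c₀)` is locally simple: for every sufficiently
saturated model `S` and every convex type `Φ`, the theory `T_Φ = Th(Φ(S))` is
ℵ₀-categorical. -/
def LocallySimple (ι : Type) (M₀ : Type) [LinearOrder M₀] (c₀ : ι → Set M₀) : Prop :=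
  ∀ (S : Type) [LinearOrder S], ∀ (cS : ι → Set S),
    CLOEquiv ι S cS M₀ c₀ → SuffSaturated ι S cS →
    ∀ Φ, IsConvexType ι M₀ c₀ Φ →
      Aleph0CatTheory ι
        (CLOTheory ι (TypeSet ι S cS Φ) (subColor cS (TypeSet ι S cS Φ)))

/-- A finite set of pairs is a partial isomorphism of CLOs: it preserves `<`,
equality, and each color, in both directions. -/
def IsPartialIso (ι : Type) {M N : Type} [LinearOrder M] [LinearOrder N]
    (cM : ι → Set M) (cN : ι → Set N) (f : Finset (M × N)) : Prop :=
  ∀ p ∈ f, ∀ q ∈ f,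
    (p.1 < q.1 ↔ p.2 < q.2) ∧ (p.1 = q.1 ↔ p.2 = q.2) ∧
    ∀ k, p.1 ∈ cM k ↔ p.2 ∈ cN k

/-- Back-and-forth equivalence of CLOs: a nonempty family of finite partial
isomorphisms with the back-and-forth extension properties. -/
def BackForthEquiv (ι : Type) (M : Type) [LinearOrder M] (cM : ι → Set M)
    (N : Type) [LinearOrder N] (cN : ι → Set N) : Prop :=
  ∃ F : Set (Finset (M × N)), F.Nonempty ∧ (∀ f ∈ F, IsPartialIso ι cM cN f) ∧
    (∀ f ∈ F, ∀ m : M, ∃ g ∈ F, f ⊆ g ∧ ∃ n : N, (m, n) ∈ g) ∧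
    (∀ f ∈ F, ∀ n : N, ∃ g ∈ F, f ⊆ g ∧ ∃ m : M, (m, n) ∈ g)

/-- The set of complete theories `Th(Φ(A))` as `A` ranges over models of the
complete theory of `(M₀, c₀)` (including the theory of the empty structure,
in case `Φ` is omitted). -/
def TheoriesAt (ι : Type) (M₀ : Type) [LinearOrder M₀] (c₀ : ι → Set M₀)
    (Φ : Set ((CLOLang ι).Formula Unit)) : Set ((CLOLang ι).Theory) :=
  {T | ∃ (A : Type) (iA : LinearOrder A) (cA : ι → Set A),
    (letI := iA; CLOEquiv ι A cA M₀ c₀) ∧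
    T = (letI := iA; CLOTheory ι (TypeSet ι A cA Φ) (subColor cA (TypeSet ι A cA Φ)))}

section BackAndForth

variable {L : FirstOrder.Language.{0, 0}} {M N : Type} [L.Structure M] [L.Structure N]

/-- A relation between two structures is elementary if tuples of related elements satisfy the
same formulas. -/
def IsElementaryRel (L : FirstOrder.Language.{0, 0}) {M N : Type} [L.Structure M] [L.Structure N]
    (f : Set (M × N)) : Prop :=
  ∀ (α : Type) (φ : L.Formula α) (w : α → M × N), (∀ a, w a ∈ f) →
    (φ.Realize (Prod.fst ∘ w) ↔ φ.Realize (Prod.snd ∘ w))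

theorem IsElementaryRel.mono {f g : Set (M × N)} (hg : IsElementaryRel L g) (h : f ⊆ g) :
    IsElementaryRel L f :=
  fun α φ w hw => hg α φ w fun a => h (hw a)

theorem IsElementaryRel.swap {f : Set (M × N)} (hf : IsElementaryRel L f) :
    IsElementaryRel L (Prod.swap ⁻¹' f : Set (N × M)) :=
  fun α φ w hw => (hf α φ (Prod.swap ∘ w) hw).symm

theorem IsElementaryRel.eq_iff {f : Set (M × N)} (hf : IsElementaryRel L f) {p q : M × N}
    (hp : p ∈ f) (hq : q ∈ f) : p.1 = q.1 ↔ p.2 = q.2 := by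
  have := hf Bool ((Term.var true).equal (Term.var false)) (fun b => cond b p q)
    (by rintro (_ | _) <;> assumption)
  simpa using this

theorem IsElementaryRel.relMap_iff {f : Set (M × N)} (hf : IsElementaryRel L f) {n : ℕ}
    (R : L.Relations n) (w : Fin n → M × N) (hw : ∀ i, w i ∈ f) :
    Structure.RelMap R (Prod.fst ∘ w) ↔ Structure.RelMap R (Prod.snd ∘ w) := by
  have := hf (Fin n) (R.formula Term.var) w hw
  simpa [Function.comp_def] using this

theorem isElementaryRel_range_iff {α : Type} (v : α → M) (v' : α → N) :
    IsElementaryRel L (range fun a => (v a, v' a)) ↔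
      ∀ φ : L.Formula α, φ.Realize v ↔ φ.Realize v' := by
  constructor
  · intro h φ
    exact h α φ (fun a => (v a, v' a)) fun a => ⟨a, rfl⟩
  · intro h β φ w hw
    choose σ hσ using hw
    have := h (φ.relabel σ)
    rw [Formula.realize_relabel, Formula.realize_relabel] at this
    have e : w = fun b => (v (σ b), v' (σ b)) := funext fun b => (hσ b).symm
    rw [e]
    exact this

theorem isElementaryRel_empty (h : L.completeTheory M = L.completeTheory N) :
    IsElementaryRel L (∅ : Set (M × N)) := by
  have key := (isElementaryRel_range_iff (L := L) (default : Empty → M) (default : Empty → N)).2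
    fun φ => by
      have := (elementarilyEquivalent_iff (L := L) (M := M) (N := N)).1 h φ
      exact this
  exact key.mono (empty_subset _)

/-- Relations in a back-and-forth system are elementary. -/
theorem isElementaryRel_of_backForth [L.IsRelational] (F : Set (Set (M × N)))
    (heq : ∀ f ∈ F, ∀ p ∈ f, ∀ q ∈ f, p.1 = q.1 ↔ p.2 = q.2)
    (hrel : ∀ f ∈ F, ∀ (n : ℕ) (R : L.Relations n) (w : Fin n → M × N), (∀ i, w i ∈ f) →
      (Structure.RelMap R (Prod.fst ∘ w) ↔ Structure.RelMap R (Prod.snd ∘ w)))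
    (forth : ∀ f ∈ F, ∀ m : M, ∃ n : N, ∃ g ∈ F, f ⊆ g ∧ (m, n) ∈ g)
    (back : ∀ f ∈ F, ∀ n : N, ∃ m : M, ∃ g ∈ F, f ⊆ g ∧ (m, n) ∈ g)
    {f : Set (M × N)} (hf : f ∈ F) : IsElementaryRel L f := by
  intro α φ w hw
  suffices H : ∀ (n : ℕ) (φ : L.BoundedFormula α n) (f : Set (M × N)), f ∈ F → (∀ a, w a ∈ f) →
      ∀ x : Fin n → M × N, (∀ i, x i ∈ f) →
      (φ.Realize (Prod.fst ∘ w) (Prod.fst ∘ x) ↔ φ.Realize (Prod.snd ∘ w) (Prod.snd ∘ x)) by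
    have := H 0 φ f hf hw Fin.elim0 fun i => i.elim0
    rw [Formula.Realize, Formula.Realize]
    convert this
  clear φ hw hf f
  intro n φ
  have hterm : ∀ (n : ℕ) (t : L.Term (α ⊕ Fin n)), ∃ a, t = Term.var a := by
    rintro n (a | ⟨g, _⟩)
    · exact ⟨a, rfl⟩
    · exact isEmptyElim g
  have hx : ∀ {n : ℕ} {f : Set (M × N)}, (∀ a, w a ∈ f) →
      ∀ x : Fin n → M × N, (∀ i, x i ∈ f) → ∀ a, Sum.elim w x a ∈ f := by
    rintro n f hw x hx (a | a)
    exacts [hw a, hx a]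
  have hfst : ∀ {n : ℕ} (x : Fin n → M × N) (a), Sum.elim (Prod.fst ∘ w) (Prod.fst ∘ x) a =
      (Sum.elim w x a).1 := by rintro n x (a | a) <;> rfl
  have hsnd : ∀ {n : ℕ} (x : Fin n → M × N) (a), Sum.elim (Prod.snd ∘ w) (Prod.snd ∘ x) a =
      (Sum.elim w x a).2 := by rintro n x (a | a) <;> rfl
  induction φ with
  | falsum => intros; rfl
  | equal t₁ t₂ =>
    intro f hf hw x hxf
    obtain ⟨a, rfl⟩ := hterm _ t₁
    obtain ⟨b, rfl⟩ := hterm _ t₂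
    simp only [BoundedFormula.Realize, Term.realize_var, hfst, hsnd]
    exact heq f hf _ (hx hw x hxf a) _ (hx hw x hxf b)
  | rel R ts =>
    intro f hf hw x hxf
    choose a ha using fun i => hterm _ (ts i)
    simp only [BoundedFormula.Realize, ha, Term.realize_var, hfst, hsnd]
    exact hrel f hf _ R (fun i => Sum.elim w x (a i)) fun i => hx hw x hxf (a i)
  | imp φ ψ ihφ ihψ =>
    intro f hf hw x hxf
    simp only [BoundedFormula.realize_imp, ihφ f hf hw x hxf, ihψ f hf hw x hxf]
  | all φ ih =>
    intro f hf hw x hxf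
    have key : ∀ g ∈ F, f ⊆ g → ∀ p ∈ g,
        (φ.Realize (Prod.fst ∘ w) (Fin.snoc (Prod.fst ∘ x) p.1) ↔
          φ.Realize (Prod.snd ∘ w) (Fin.snoc (Prod.snd ∘ x) p.2)) := by
      intro g hg hfg p hp
      have := ih g hg (fun a => hfg (hw a)) (Fin.snoc (α := fun _ => M × N) x p)
        (by
          intro i
          refine Fin.lastCases ?_ (fun j => ?_) i
          · simpa using hp
          · simpa using hfg (hxf j))
      rwa [Fin.comp_snoc, Fin.comp_snoc] at this
    simp only [BoundedFormula.realize_all]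
    constructor
    · intro h n
      obtain ⟨m, g, hg, hfg, hmn⟩ := back f hf n
      exact (key g hg hfg _ hmn).1 (h m)
    · intro h m
      obtain ⟨n, g, hg, hfg, hmn⟩ := forth f hf m
      exact (key g hg hfg _ hmn).2 (h n)

/-- The set defined by a formula without parameters. -/
def formulaSet {L : FirstOrder.Language.{0, 0}} {α : Type} (M : Type) [L.Structure M]
    (φ : L.Formula α) : Set (α → M) :=
  {v | φ.Realize v}

/-- A structure has finitely many definable sets if in every finite arity only finitely many
sets are definable without parameters. -/
def FinitelyManyDefinable (L : FirstOrder.Language.{0, 0}) (M : Type) [L.Structure M] : Prop :=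
  ∀ (α : Type) [Finite α],
    (range (formulaSet (L := L) (α := α) M)).Finite

/-- The complete type of a tuple. -/
def tupleType (L : FirstOrder.Language.{0, 0}) {M : Type} [L.Structure M] {α : Type} (v : α → M) :
    Set (L.Formula α) :=
  {φ | φ.Realize v}

theorem FinitelyManyDefinable.finite_range_tupleType (h : FinitelyManyDefinable L M)
    (α : Type) [Finite α] : (range (tupleType L : (α → M) → Set (L.Formula α))).Finite := by
  have h1 := (h α).powerset
  refine Set.Finite.of_finite_image
    (f := fun t => (formulaSet (L := L) (α := α) M) '' t)
    (h1.subset ?_) ?_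
  · rintro _ ⟨t, -, rfl⟩
    exact image_subset_range _ _
  · rintro _ ⟨v, rfl⟩ _ ⟨v', rfl⟩ hvv
    ext φ
    have aux : ∀ u : α → M, formulaSet M φ ∈
        (formulaSet (L := L) (α := α) M) '' tupleType L u ↔
        φ ∈ tupleType L u := by
      intro u
      constructor
      · rintro ⟨ψ, hψ, e⟩
        have : u ∈ formulaSet M ψ := hψ
        rw [e] at this
        exact this
      · exact fun hφ => ⟨φ, hφ, rfl⟩
    dsimp only at hvv
    rw [← aux v, ← aux v', hvv]

theorem finitelyManyDefinable_of_finite_tupleType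
    (h : ∀ (α : Type) [Finite α], (range (tupleType L : (α → M) → Set (L.Formula α))).Finite) :
    FinitelyManyDefinable L M := by
  intro α _
  refine Set.Finite.of_finite_image (f := fun s => tupleType L '' s) ((h α).powerset.subset ?_) ?_
  · rintro _ ⟨t, -, rfl⟩
    exact image_subset_range _ _
  · rintro _ ⟨φ, rfl⟩ _ ⟨ψ, rfl⟩ e
    have aux : ∀ (χ : L.Formula α) (u : α → M),
        tupleType L u ∈ tupleType L '' formulaSet M χ ↔ χ.Realize u := by
      intro χ u
      constructor
      · rintro ⟨v, hv, e⟩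
        have : χ ∈ tupleType L v := hv
        rw [e] at this
        exact this
      · exact fun hu => ⟨u, hu, rfl⟩
    ext u
    change φ.Realize u ↔ ψ.Realize u
    rw [← aux φ, ← aux ψ]
    dsimp only at e
    rw [e]

theorem FinitelyManyDefinable.of_completeTheory_eq (hM : FinitelyManyDefinable L M)
    (h : L.completeTheory M = L.completeTheory N) : FinitelyManyDefinable L N := by
  intro α _
  have key : ∀ φ ψ : L.Formula α,
      formulaSet M φ = formulaSet M ψ →
      formulaSet N φ = formulaSet N ψ := by
    intro φ ψ e
    have := (isElementaryRel_empty h) Empty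
      ((((φ.iff ψ).not.relabel Sum.inr : L.Formula (Empty ⊕ α))).iExs α) Empty.elim
      (fun a => a.elim)
    simp only [Formula.realize_iExs, Formula.realize_relabel, Formula.realize_not,
      Formula.realize_iff] at this
    ext v
    change φ.Realize v ↔ ψ.Realize v
    by_contra hv
    obtain ⟨u, hu⟩ := this.2 ⟨v, hv⟩
    exact hu (by
      have : u ∈ formulaSet M φ ↔ u ∈ formulaSet M ψ := by
        rw [e]
      exact this)
  have hfac : Function.FactorsThrough
      (formulaSet (L := L) (α := α) N)
      (formulaSet (L := L) (α := α) M) := key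
  refine ((hM α).image
    (Function.extend (formulaSet (L := L) (α := α) M) (formulaSet N) fun _ => ∅)).subset ?_
  rintro _ ⟨φ, rfl⟩
  exact ⟨_, ⟨φ, rfl⟩, hfac.extend_apply _ φ⟩

/-- With finitely many definable sets, finite elementary relations extend to new points. -/
theorem IsElementaryRel.exists_insert (hN : FinitelyManyDefinable L N) {f : Set (M × N)}
    (hf : IsElementaryRel L f) (hfin : f.Finite) (m : M) :
    ∃ n : N, IsElementaryRel L (insert (m, n) f) := by
  have : Finite f := hfin
  set u : f ⊕ Unit → M := Sum.elim (fun p => p.1.1) fun _ => m with hu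
  let D : L.Formula (f ⊕ Unit) → Set (f ⊕ Unit → N) := fun φ => {v | φ.Realize v}
  have hfin' : (D '' tupleType L u).Finite := (hN (f ⊕ Unit)).subset (image_subset_range _ _)
  obtain ⟨t, htu, ht, hte⟩ := (exists_subset_image_finite_and
    (p := fun s => s = D '' tupleType L u)).1 ⟨_, subset_rfl, hfin', rfl⟩
  have : Finite t := ht
  have h1 := hf f ((Formula.iInf fun φ : t => φ.1).iExs Unit) Subtype.val fun a => a.2
  simp only [Formula.realize_iExs, Formula.realize_iInf] at h1
  obtain ⟨n, hn⟩ := h1.1 ⟨fun _ => m, fun φ => htu φ.2⟩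
  set u' : f ⊕ Unit → N := Sum.elim (fun p => p.1.2) n with hu'
  refine ⟨n (), ?_⟩
  have h2 : ∀ φ ∈ tupleType L u, φ.Realize u' := by
    intro φ hφ
    have : D φ ∈ D '' t := hte ▸ mem_image_of_mem D hφ
    obtain ⟨ψ, hψ, e⟩ := this
    have h3 : u' ∈ D ψ := hn ⟨ψ, hψ⟩
    rw [e] at h3
    exact h3
  refine ((isElementaryRel_range_iff u u').2 fun φ => ⟨h2 φ, fun h => ?_⟩).mono ?_
  · by_contra hc
    exact h2 φ.not hc h
  · rintro p (rfl | hp)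
    · exact ⟨Sum.inr (), rfl⟩
    · exact ⟨Sum.inl ⟨p, hp⟩, rfl⟩

theorem IsElementaryRel.exists_insert_left (hM : FinitelyManyDefinable L M) {f : Set (M × N)}
    (hf : IsElementaryRel L f) (hfin : f.Finite) (n : N) :
    ∃ m : M, IsElementaryRel L (insert (m, n) f) := by
  obtain ⟨m, hm⟩ := hf.swap.exists_insert hM (hfin.preimage Prod.swap_injective.injOn) n
  refine ⟨m, hm.swap.mono ?_⟩
  rintro p (rfl | hp)
  · exact Or.inl rfl
  · exact Or.inr (by simpa using hp)

end BackAndForth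

theorem exists_monotone_seq_meets {P : Type*} [Preorder P] {κ : Type*} [Countable κ] (p : P)
    (D : κ → Set P) (hD : ∀ k, IsCofinal (D k)) :
    ∃ s : ℕ → P, Monotone s ∧ ∀ k, ∃ n, s n ∈ D k := by
  let := Encodable.ofCountable κ
  let 𝒟 : κ → Order.Cofinal P := fun k => ⟨D k, hD k⟩
  exact ⟨Order.sequenceOfCofinals p 𝒟, Order.sequenceOfCofinals.monotone p 𝒟,
    fun k => ⟨_, Order.sequenceOfCofinals.encode_mem p 𝒟 k⟩⟩

section Categoricity

variable {L : FirstOrder.Language.{0, 0}} {M N : Type} [L.Structure M] [L.Structure N]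

/-- Countable elementarily equivalent relational structures with finitely many definable sets
are isomorphic. -/
theorem nonempty_equiv_of_finitelyManyDefinable [L.IsRelational] [Countable M] [Countable N]
    (hM : FinitelyManyDefinable L M) (hN : FinitelyManyDefinable L N)
    (h : L.completeTheory M = L.completeTheory N) : Nonempty (L.Equiv M N) := by
  let P := {f : Set (M × N) // f.Finite ∧ IsElementaryRel L f}
  let D : M ⊕ N → Set P := Sum.elim (fun m => {f | ∃ n, (m, n) ∈ f.1}) fun n =>
    {f | ∃ m, (m, n) ∈ f.1}
  obtain ⟨s, hs, hsD⟩ := exists_monotone_seq_meets (P := P)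
    ⟨∅, finite_empty, isElementaryRel_empty h⟩ D (by
      rintro (m | n) f
      · obtain ⟨n, hn⟩ := f.2.2.exists_insert hN f.2.1 m
        exact ⟨⟨_, f.2.1.insert _, hn⟩, ⟨n, mem_insert _ _⟩, subset_insert _ _⟩
      · obtain ⟨m, hm⟩ := f.2.2.exists_insert_left hM f.2.1 n
        exact ⟨⟨_, f.2.1.insert _, hm⟩, ⟨m, mem_insert _ _⟩, subset_insert _ _⟩)
  choose k g hg using fun m => hsD (Sum.inl m)
  choose k' g' hg' using fun n => hsD (Sum.inr n)
  have hg₂ : ∀ m j, k m ≤ j → (m, g m) ∈ (s j).1 := fun m j hj => hs hj (hg m)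
  have hg₂' : ∀ n j, k' n ≤ j → (g' n, n) ∈ (s j).1 := fun n j hj => hs hj (hg' n)
  let e : M ≃ N :=
    { toFun := g
      invFun := g'
      left_inv := fun m => ((s (max (k m) (k' (g m)))).2.2.eq_iff
        (hg₂' _ _ (le_max_right _ _)) (hg₂ _ _ (le_max_left _ _))).2 rfl
      right_inv := fun n => ((s (max (k (g' n)) (k' n))).2.2.eq_iff
        (hg₂ _ _ (le_max_left _ _)) (hg₂' _ _ (le_max_right _ _))).1 rfl }
  refine ⟨⟨e, fun f => isEmptyElim f, fun {n} R x => ?_⟩⟩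
  have := (s (Finset.univ.sup fun i => k (x i))).2.2.relMap_iff R (fun i => (x i, g (x i)))
    fun i => hg₂ _ _ (Finset.le_sup (f := fun i => k (x i)) (Finset.mem_univ i))
  exact this.symm

end Categoricity

section GenericModel

open Filter

variable {L : FirstOrder.Language.{0, 0}} {M N : Type} [L.Structure M] [L.Structure N]

/-- An ultrafilter on assignments is Henkin if existential statements are witnessed by
variables. -/
def IsHenkin (L : FirstOrder.Language.{0, 0}) {M : Type} [L.Structure M]
    (U : Ultrafilter (ℕ → M)) : Prop :=
  ∀ φ : L.Formula (ℕ ⊕ Unit), (∀ᶠ w : ℕ → M in U, ∃ a, φ.Realize (Sum.elim w fun _ => a)) →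
    ∃ j, ∀ᶠ w : ℕ → M in U, φ.Realize (Sum.elim w fun _ => w j)

theorem IsHenkin.realize_iff [L.IsRelational] {U : Ultrafilter (ℕ → M)} (hU : IsHenkin L U)
    {e : ℕ → N} (he : Function.Surjective e)
    (heq : ∀ i j, e i = e j ↔ ∀ᶠ w : ℕ → M in U, w i = w j)
    (hrel : ∀ (n : ℕ) (R : L.Relations n) (i : Fin n → ℕ),
      Structure.RelMap R (e ∘ i) ↔ ∀ᶠ w : ℕ → M in U, Structure.RelMap R (w ∘ i))
    {α : Type} (φ : L.Formula α) (u : α → ℕ) :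
    φ.Realize (e ∘ u) ↔ ∀ᶠ w : ℕ → M in U, φ.Realize (w ∘ u) := by
  suffices H : ∀ (n : ℕ) (φ : L.BoundedFormula α n) (x : Fin n → ℕ),
      φ.Realize (e ∘ u) (e ∘ x) ↔ ∀ᶠ w : ℕ → M in U, φ.Realize (w ∘ u) (w ∘ x) by
    have := H 0 φ Fin.elim0
    simp only [Formula.Realize]
    convert this
  clear φ
  have hterm : ∀ (n : ℕ) (t : L.Term (α ⊕ Fin n)), ∃ a, t = Term.var a := by
    rintro n (a | ⟨g, _⟩)
    · exact ⟨a, rfl⟩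
    · exact isEmptyElim g
  have hcomp : ∀ {X : Type} (w : ℕ → X) {n : ℕ} (x : Fin n → ℕ) (a),
      Sum.elim (w ∘ u) (w ∘ x) a = w (Sum.elim u x a) := by
    rintro X w n x (a | a) <;> rfl
  intro n φ
  induction φ with
  | falsum =>
    intro x
    simp only [BoundedFormula.Realize, eventually_false_iff_eq_bot, false_iff]
    exact U.neBot.ne
  | equal t₁ t₂ =>
    intro x
    obtain ⟨a, rfl⟩ := hterm _ t₁
    obtain ⟨b, rfl⟩ := hterm _ t₂
    simp only [BoundedFormula.Realize, Term.realize_var, hcomp]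
    exact heq _ _
  | rel R ts =>
    intro x
    choose a ha using fun i => hterm _ (ts i)
    simp only [BoundedFormula.Realize, ha, Term.realize_var, hcomp]
    exact hrel _ R fun i => Sum.elim u x (a i)
  | imp φ ψ ihφ ihψ =>
    intro x
    simp only [BoundedFormula.realize_imp, ihφ x, ihψ x, Ultrafilter.eventually_imp]
  | @all n φ ih =>
    intro x
    have hsnoc : ∀ {X : Type} (w : ℕ → X) (j : ℕ),
        (Fin.snoc (w ∘ x) (w j) : Fin (n + 1) → X) = w ∘ (Fin.snoc x j : Fin (n + 1) → ℕ) :=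
      fun w j => (Fin.comp_snoc w x j).symm
    simp only [BoundedFormula.realize_all]
    constructor
    · intro hall
      by_contra hc
      rw [← Ultrafilter.eventually_not] at hc
      let σ : α ⊕ Fin (n + 1) → ℕ ⊕ Unit :=
        Sum.elim (Sum.inl ∘ u) (Fin.snoc (α := fun _ => ℕ ⊕ Unit) (Sum.inl ∘ x) (Sum.inr ()))
      have hσ : ∀ (w : ℕ → M) (a : M),
          (φ.not.toFormula.relabel σ).Realize (Sum.elim w fun _ => a) ↔
            ¬ φ.Realize (w ∘ u) (Fin.snoc (w ∘ x) a) := by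
        intro w a
        rw [Formula.realize_relabel, BoundedFormula.realize_toFormula, BoundedFormula.realize_not]
        have e2 : (Sum.elim w fun _ => a) ∘ σ ∘ Sum.inr =
            (Fin.snoc (w ∘ x) a : Fin (n + 1) → M) := by
          simp only [σ, Sum.elim_comp_inr]
          rw [Fin.comp_snoc]
          rfl
        exact not_congr (iff_of_eq (congrArg₂ _ rfl e2))
      obtain ⟨j, hj⟩ := hU (φ.not.toFormula.relabel σ) (hc.mono fun w hw => by
        push Not at hw
        obtain ⟨a, ha⟩ := hw
        exact ⟨a, (hσ w a).2 ha⟩)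
      have h1 := hall (e j)
      rw [hsnoc, ih] at h1
      obtain ⟨w, hw1, hw2⟩ := (hj.and h1).exists
      rw [hσ, hsnoc] at hw1
      exact hw1 hw2
    · intro h b
      obtain ⟨j, rfl⟩ := he b
      rw [hsnoc, ih]
      exact h.mono fun w hw => hsnoc w j ▸ hw (w j)

theorem exists_finset_formula {β : Type} (φ : L.Formula β) :
    ∃ (s : Finset β) (ψ : L.Formula s), ∀ w : β → M, φ.Realize w ↔ ψ.Realize fun b => w b := by
  classical
  exact ⟨φ.freeVarFinset, φ.restrictFreeVar id, fun w =>
    (BoundedFormula.realize_restrictFreeVar (f := id) w fun _ => rfl).symm⟩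

theorem exists_finset_realize_congr {β : Type} (φ : L.Formula β) :
    ∃ s : Finset β, ∀ w w' : β → M, (∀ b ∈ s, w b = w' b) → (φ.Realize w ↔ φ.Realize w') := by
  obtain ⟨s, ψ, h⟩ := exists_finset_formula (M := M) φ
  refine ⟨s, fun w w' hw => ?_⟩
  rw [h, h, show (fun b : s => w b) = fun b : s => w' b from funext fun b => hw b b.2]

/-- A Rasiowa–Sikorski lemma for assignments of the variables. -/
theorem exists_isHenkin_ultrafilter [Countable (L.Formula (ℕ ⊕ Unit))]
    (F : Filter (ℕ → M)) [NeBot F] (K : ℕ)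
    (hF : ∀ j ≥ K, ∀ s ∈ F, ∀ᶠ w in F, ∀ a, Function.update w j a ∈ s)
    {κ : Type} [Countable κ] (D : κ → Set (L.Formula ℕ))
    (hD : ∀ k (θ : L.Formula ℕ), (∃ᶠ w in F, θ.Realize w) →
      ∃ θ' ∈ D k, ∃ᶠ w in F, θ.Realize w ∧ θ'.Realize w) :
    ∃ U : Ultrafilter (ℕ → M), ↑U ≤ F ∧ IsHenkin L U ∧
      ∀ k, ∃ θ ∈ D k, ∀ᶠ w : ℕ → M in U, θ.Realize w := by
  let P := {θ : L.Formula ℕ // ∃ᶠ w in F, θ.Realize w}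
  let : Preorder P := Preorder.lift fun θ : P => OrderDual.toDual (formulaSet M θ.1)
  have hle : ∀ θ θ' : P, θ ≤ θ' ↔ formulaSet M θ'.1 ⊆ formulaSet M θ.1 := fun _ _ => Iff.rfl
  let E : L.Formula (ℕ ⊕ Unit) ⊕ κ → Set P := Sum.elim
    (fun φ => {θ | ∃ j, ∀ w : ℕ → M, θ.1.Realize w →
      (∃ a, φ.Realize (Sum.elim w fun _ => a)) → φ.Realize (Sum.elim w fun _ => w j)})
    (fun k => {θ | ∃ θ' ∈ D k, ∀ w : ℕ → M, θ.1.Realize w → θ'.Realize w})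
  obtain ⟨s, hs, hsE⟩ := exists_monotone_seq_meets (P := P)
    ⟨⊤, (Eventually.of_forall fun w => by simp).frequently⟩ E (by
      rintro (φ | k) θ
      · obtain ⟨s₁, hs₁⟩ := exists_finset_realize_congr (M := M) θ.1
        obtain ⟨s₂, hs₂⟩ := exists_finset_realize_congr (M := M) φ
        obtain ⟨j, hj⟩ := (s₁ ∪ s₂.preimage Sum.inl Sum.inl_injective.injOn ∪
          Finset.range K).exists_notMem
        simp only [Finset.mem_union, Finset.mem_preimage, Finset.mem_range, not_or,
          not_lt] at hj
        have h₁ : ∀ w a, θ.1.Realize (Function.update w j a) ↔ θ.1.Realize w := fun w a =>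
          hs₁ _ _ fun b hb => Function.update_of_ne (by rintro rfl; exact hj.1.1 hb) _ _
        have h₂ : ∀ w a b, φ.Realize (Sum.elim (Function.update w j a) fun _ => b) ↔
            φ.Realize (Sum.elim w fun _ => b) := fun w a b => by
          refine hs₂ _ _ ?_
          rintro (i | i) hi
          · exact Function.update_of_ne (by rintro rfl; exact hj.1.2 hi) _ _
          · rfl
        let ψ : L.Formula ℕ := (φ.iExs Unit).imp (φ.relabel (Sum.elim id fun _ => j))
        have hψ : ∀ w : ℕ → M, ψ.Realize w ↔ ((∃ a, φ.Realize (Sum.elim w fun _ => a)) →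
            φ.Realize (Sum.elim w fun _ => w j)) := by
          intro w
          simp only [ψ, Formula.realize_imp, Formula.realize_iExs, Formula.realize_relabel]
          refine imp_congr ⟨?_, ?_⟩ (iff_of_eq (congrArg _ ?_))
          · rintro ⟨i, hi⟩
            exact ⟨i (), hi⟩
          · rintro ⟨a, ha⟩
            exact ⟨fun _ => a, ha⟩
          · ext (i | i) <;> rfl
        have hfreq : ∃ᶠ w in F, (θ.1 ⊓ ψ).Realize w := by
          intro hc
          obtain ⟨w, hw, hw'⟩ := (θ.2.and_eventually (hF j hj.2 _ hc)).exists
          by_cases hex : ∃ a, φ.Realize (Sum.elim w fun _ => a)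
          · obtain ⟨a, ha⟩ := hex
            refine hw' a (Formula.realize_inf.2 ⟨(h₁ w a).2 hw, (hψ _).2 fun _ => ?_⟩)
            rw [h₂, Function.update_self]
            exact ha
          · refine hw' (w j) (Formula.realize_inf.2 ⟨(h₁ w _).2 hw, (hψ _).2 fun h => ?_⟩)
            simp only [h₂] at h
            exact absurd h hex
        exact ⟨⟨θ.1 ⊓ ψ, hfreq⟩, ⟨j, fun w hw => (hψ w).1 (Formula.realize_inf.1 hw).2⟩,
          fun w hw => (Formula.realize_inf.1 hw).1⟩
      · obtain ⟨θ', hθ', hf⟩ := hD k θ.1 θ.2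
        exact ⟨⟨θ.1 ⊓ θ', hf.mono fun w hw => Formula.realize_inf.2 hw⟩,
          ⟨θ', hθ', fun w hw => (Formula.realize_inf.1 hw).2⟩,
          fun w hw => (Formula.realize_inf.1 hw).1⟩)
  let G : ℕ → Filter (ℕ → M) := fun n => F ⊓ 𝓟 (formulaSet M (s n).1)
  have hG : Antitone G := fun i j hij =>
    inf_le_inf_left F (principal_mono.2 ((hle _ _).1 (hs hij)))
  have hne : NeBot (iInf G) := iInf_neBot_of_directed' hG.directed_ge fun n =>
    frequently_mem_iff_neBot.1 (s n).2
  have hU : ∀ n, ∀ᶠ w in (Ultrafilter.of (iInf G) : Filter (ℕ → M)), (s n).1.Realize w := fun n =>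
    ((Ultrafilter.of_le _).trans (iInf_le G n)).trans inf_le_right (mem_principal_self _)
  refine ⟨Ultrafilter.of (iInf G), ((Ultrafilter.of_le _).trans (iInf_le G 0)).trans inf_le_left,
    fun φ hφ => ?_, fun k => ?_⟩
  · obtain ⟨n, j, hj⟩ := hsE (Sum.inl φ)
    exact ⟨j, ((hU n).and hφ).mono fun w hw => hj w hw.1 hw.2⟩
  · obtain ⟨n, θ, hθ, h⟩ := hsE (Sum.inr k)
    exact ⟨θ, hθ, (hU n).mono fun w hw => h w hw⟩

end GenericModel

section RyllNardzewski

open Filter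

variable {L : FirstOrder.Language.{0, 0}} {M : Type} [L.Structure M]

/-- If infinitely many sets are definable, some type is not isolated. -/
theorem exists_ultrafilter_forall_split {α : Type}
    (h : ¬ (range (formulaSet (L := L) (α := α) M)).Finite) :
    ∃ U : Ultrafilter (α → M), ∀ φ : L.Formula α, formulaSet M φ ∈ U →
      ∃ ψ : L.Formula α, (formulaSet M φ ∩ formulaSet M ψ).Nonempty ∧
        (formulaSet M φ \ formulaSet M ψ).Nonempty := by
  let A : Set (Set (α → M)) :=
    {s | ∀ ψ : L.Formula α, s ⊆ formulaSet M ψ ∨ s ⊆ (formulaSet M ψ)ᶜ}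
  have hne : NeBot (generate (compl '' A)) := by
    rw [generate_neBot_iff]
    intro t ht htf
    by_contra hc
    rw [not_nonempty_iff_eq_empty] at hc
    refine h (((htf.image compl).powerset.image sUnion).subset ?_)
    rintro _ ⟨ψ, rfl⟩
    refine ⟨{s ∈ compl '' t | s ⊆ formulaSet M ψ}, sep_subset _ _, ?_⟩
    refine subset_antisymm (sUnion_subset fun s hs => hs.2) fun v hv => ?_
    have hv' : v ∉ ⋂₀ t := hc ▸ notMem_empty v
    simp only [mem_sInter, not_forall] at hv'
    obtain ⟨s, hs, hvs⟩ := hv'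
    refine ⟨sᶜ, ⟨mem_image_of_mem _ hs, ?_⟩, hvs⟩
    obtain ⟨a, ha, rfl⟩ := ht hs
    exact fun u hu => (ha ψ).resolve_right (fun h' => h' (not_not.1 hvs) hv) (not_not.1 hu)
  refine ⟨Ultrafilter.of (generate (compl '' A)), fun φ hφ => ?_⟩
  by_contra! hc
  have hA : formulaSet M φ ∈ A := by
    intro ψ
    rcases (formulaSet M φ ∩ formulaSet M ψ).eq_empty_or_nonempty with h0 | h0
    · exact Or.inr (disjoint_iff_inter_eq_empty.2 h0).subset_compl_right
    · exact Or.inl (sdiff_eq_empty.1 (hc ψ h0))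
  have : (formulaSet M φ)ᶜ ∈ Ultrafilter.of (generate (compl '' A)) :=
    Ultrafilter.of_le _ (mem_generate_of_mem (mem_image_of_mem _ hA))
  exact Ultrafilter.compl_notMem_iff.2 hφ this

theorem exists_formulaSet_eq_image {α : Type} [Finite α] [Nonempty M] (θ : L.Formula ℕ)
    (i : α → ℕ) : ∃ ζ : L.Formula α, formulaSet M ζ = (fun w => w ∘ i) '' formulaSet M θ := by
  classical
  cases nonempty_fintype α
  obtain ⟨s, ψ, hψ⟩ := exists_finset_formula (M := M) θ
  let s' : Finset ℕ := s ∪ Finset.univ.image i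
  let j : s → s' := fun b => ⟨b, Finset.mem_union_left _ b.2⟩
  let i' : α → s' := fun a => ⟨i a, Finset.mem_union_right _
    (Finset.mem_image_of_mem i (Finset.mem_univ a))⟩
  have hdef : (∅ : Set M).Definable L (formulaSet M (ψ.relabel j)) :=
    empty_definable_iff.2 ⟨_, rfl⟩
  obtain ⟨ζ, hζ⟩ := empty_definable_iff.1 (hdef.image_comp i')
  refine ⟨ζ, Eq.trans hζ.symm ?_⟩
  ext v
  constructor
  · rintro ⟨u, hu, rfl⟩
    let w : ℕ → M := fun n => if hn : n ∈ s' then u ⟨n, hn⟩ else Classical.arbitrary M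
    have hw : ∀ b : s', w b = u b := fun b => dif_pos b.2
    refine ⟨w, (hψ w).2 ?_, funext fun a => hw (i' a)⟩
    have := Formula.realize_relabel.1 hu
    rwa [show (fun b : s => w b) = u ∘ j from funext fun b => hw (j b)]
  · rintro ⟨w, hw, rfl⟩
    refine ⟨fun b => w b, ?_, rfl⟩
    exact Formula.realize_relabel.2 ((hψ w).1 hw)

instance CLOLang.isRelational (ι : Type) : (CLOLang ι).IsRelational :=
  fun _ => inferInstanceAs (IsEmpty Empty)

theorem CLOLang.countable_formula (ι : Type) [Countable ι] (α : Type) [Countable α] :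
    Countable ((CLOLang ι).Formula α) := by
  have hrel : ∀ n, Countable ((CLOLang ι).Relations n) := by
    intro n
    let g : CLORel ι n → Option ι := fun r => match r with
      | .lt => none
      | .color i => some i
    refine Function.Injective.countable (f := g) ?_
    intro r r' h
    cases r <;> cases r' <;> simp_all [g] <;> rfl
  have hfun : ∀ n, Countable ((CLOLang ι).Functions n) :=
    fun n => inferInstanceAs (Countable Empty)
  have : Countable (CLOLang ι).Symbols := inferInstanceAs (Countable (_ ⊕ _))
  have hcard : (CLOLang ι).card ≤ Cardinal.aleph0 := Cardinal.mk_le_aleph0_iff.2 this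
  have : Countable (Σ n, (CLOLang ι).BoundedFormula α n) := by
    rw [← Cardinal.mk_le_aleph0_iff]
    refine BoundedFormula.card_le.trans (max_le le_rfl ?_)
    exact Cardinal.add_le_aleph0.2 ⟨by simp, by simpa using hcard⟩
  exact Function.Injective.countable
    (f := fun φ : (CLOLang ι).Formula α => (⟨0, φ⟩ : Σ n, (CLOLang ι).BoundedFormula α n))
    fun φ ψ h => by simpa using h

/-- The countable colored linear order given by a Henkin ultrafilter. -/
theorem exists_countable_model_of_isHenkin {ι M : Type} [LinearOrder M] (c : ι → Set M)
    (U : Ultrafilter (ℕ → M)) (hU : letI := CLOStr ι M c; IsHenkin (CLOLang ι) U) :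
    ∃ (N : Type) (iN : LinearOrder N) (cN : ι → Set N) (e : ℕ → N), Countable N ∧
      Function.Surjective e ∧ ∀ (α : Type) (φ : (CLOLang ι).Formula α) (u : α → ℕ),
        (letI := iN; Sat N cN φ (e ∘ u)) ↔ ∀ᶠ w : ℕ → M in U, Sat M c φ (w ∘ u) := by
  let x : ℕ → Germ (U : Filter (ℕ → M)) M := fun i => Germ.ofFun fun w => w i
  refine ⟨range x, inferInstance, fun k => {g | g.1.LiftPred (· ∈ c k)}, rangeFactorization x,
    (countable_range x).to_subtype, rangeFactorization_surjective, fun α φ u => ?_⟩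
  let := CLOStr ι M c
  let := CLOStr ι (range x) fun k => {g | g.1.LiftPred (· ∈ c k)}
  refine IsHenkin.realize_iff hU rangeFactorization_surjective ?_ ?_ φ u
  · intro i j
    rw [Subtype.ext_iff]
    exact Germ.coe_eq
  · intro n R i
    cases R with
    | lt =>
      change x (i 0) < x (i 1) ↔ _
      exact iff_of_eq (congrFun (congrFun Germ.lt_def (x (i 0))) (x (i 1)))
    | color k => rfl

theorem completeTheory_eq_of_sat_iff {ι M N : Type} [LinearOrder M] [LinearOrder N]
    (c : ι → Set M) (cN : ι → Set N) (U : Ultrafilter (ℕ → M)) (e : ℕ → N)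
    (h : ∀ (α : Type) (φ : (CLOLang ι).Formula α) (u : α → ℕ),
      Sat N cN φ (e ∘ u) ↔ ∀ᶠ w : ℕ → M in U, Sat M c φ (w ∘ u)) :
    CLOTheory ι N cN = CLOTheory ι M c := by
  ext φ
  have := h Empty φ Empty.elim
  have hw : ∀ w : ℕ → M, Sat M c φ (w ∘ Empty.elim) ↔ φ ∈ CLOTheory ι M c := fun w =>
    iff_of_eq (congrArg (Sat M c φ) (Subsingleton.elim _ _))
  simp only [hw, eventually_const] at this
  rw [← this]
  exact iff_of_eq (congrArg (Sat N cN φ) (Subsingleton.elim _ _))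

/-- The Ryll-Nardzewski theorem: a categorical theory has finitely many definable sets. -/
theorem Aleph0CatTheory.finitelyManyDefinable {ι M : Type} [Countable ι] [LinearOrder M]
    [Nonempty M] (c : ι → Set M) (hM : Aleph0CatTheory ι (CLOTheory ι M c)) :
    letI := CLOStr ι M c; FinitelyManyDefinable (CLOLang ι) M := by
  let := CLOStr ι M c
  intro α _
  by_contra hinf
  have := CLOLang.countable_formula ι (ℕ ⊕ Unit)
  obtain ⟨V, hV⟩ := exists_ultrafilter_forall_split hinf
  obtain ⟨i₀, hi₀⟩ := Countable.exists_injective_nat α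
  have hsurj : Function.Surjective fun w : ℕ → M => w ∘ i₀ := hi₀.surjective_comp_right
  have : NeBot (comap (fun w : ℕ → M => w ∘ i₀) V) := V.neBot.comap_of_surj hsurj
  obtain ⟨K, hK⟩ := (finite_range i₀).bddAbove
  obtain ⟨U₁, hU₁, hH₁, -⟩ := exists_isHenkin_ultrafilter (L := CLOLang ι)
    (comap (fun w : ℕ → M => w ∘ i₀) V) (K + 1) (by
      rintro j hj s ⟨t, ht, hts⟩
      refine mem_of_superset (preimage_mem_comap ht) fun w hw a => hts ?_
      have : Function.update w j a ∘ i₀ = w ∘ i₀ := funext fun b =>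
        Function.update_of_ne (by have := hK (mem_range_self b); omega) _ _
      simpa [this] using hw) (κ := Empty) Empty.elim (fun k => k.elim)
  obtain ⟨U₂, -, hH₂, hD⟩ := exists_isHenkin_ultrafilter (L := CLOLang ι)
    (⊤ : Filter (ℕ → M)) 0 (by simp) (κ := α → ℕ)
    (fun i => {θ | ∃ φ : (CLOLang ι).Formula α, formulaSet M φ ∈ V ∧ θ = (φ.relabel i).not}) (by
      intro i θ hθ
      rw [frequently_top] at hθ
      by_contra hc
      have hsub : ∀ φ : (CLOLang ι).Formula α, formulaSet M φ ∈ V →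
          (fun w : ℕ → M => w ∘ i) '' formulaSet M θ ⊆ formulaSet M φ := by
        rintro φ hφ _ ⟨w, hw, rfl⟩
        by_contra hn
        refine hc ⟨_, ⟨φ, hφ, rfl⟩, frequently_top.2 ⟨w, hw, ?_⟩⟩
        rw [Formula.realize_not, Formula.realize_relabel]
        exact hn
      obtain ⟨ζ, hζ⟩ := exists_formulaSet_eq_image (M := M) θ i
      rw [← hζ] at hsub
      have hζne : (formulaSet M ζ).Nonempty := hζ ▸ Set.Nonempty.image _ hθ
      have hζV : formulaSet M ζ ∈ V := by
        by_contra hn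
        obtain ⟨v, hv⟩ := hζne
        exact hsub ζ.not (Ultrafilter.compl_mem_iff_notMem.2 hn) hv hv
      obtain ⟨ψ, ⟨v, hv, hvψ⟩, ⟨v', hv', hvψ'⟩⟩ := hV ζ hζV
      by_cases hψ : formulaSet M ψ ∈ V
      · exact hvψ' (hsub ψ hψ hv')
      · exact hsub ψ.not (Ultrafilter.compl_mem_iff_notMem.2 hψ) hv hvψ)
  obtain ⟨N₁, _, c₁, e₁, hN₁, -, hs₁⟩ := exists_countable_model_of_isHenkin c U₁ hH₁
  obtain ⟨N₂, _, c₂, e₂, hN₂, he₂, hs₂⟩ := exists_countable_model_of_isHenkin c U₂ hH₂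
  obtain ⟨g⟩ := hM N₁ N₂ _ _ c₁ c₂ hN₁ hN₂ (completeTheory_eq_of_sat_iff c c₁ U₁ e₁ hs₁)
    (completeTheory_eq_of_sat_iff c c₂ U₂ e₂ hs₂)
  choose i hi using fun a => he₂ (g (e₁ (i₀ a)))
  obtain ⟨_, ⟨φ, hφ, rfl⟩, hθ⟩ := hD i
  have h₁ : Sat N₁ c₁ φ (e₁ ∘ i₀) :=
    (hs₁ α φ i₀).2 (hU₁ (preimage_mem_comap hφ))
  have h₂ : ¬ Sat N₂ c₂ φ (e₂ ∘ i) := by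
    rw [hs₂, ← Ultrafilter.eventually_not]
    refine hθ.mono fun w hw => ?_
    rw [Formula.realize_not, Formula.realize_relabel] at hw
    exact hw
  refine h₂ ?_
  let := CLOStr ι N₁ c₁
  let := CLOStr ι N₂ c₂
  have : e₂ ∘ i = g ∘ (e₁ ∘ i₀) := funext hi
  rw [this]
  exact (StrongHomClass.realize_formula g φ).2 h₁

end RyllNardzewski

section ElementaryRelationsOfOrders

variable {ι M N : Type} [LinearOrder M] [LinearOrder N] {c : ι → Set M} {d : ι → Set N}

/-- Elementary relations between colored linear orders. -/
def CLOElementaryRel (c : ι → Set M) (d : ι → Set N) (f : Set (M × N)) : Prop :=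
  letI := CLOStr ι M c
  letI := CLOStr ι N d
  IsElementaryRel (CLOLang ι) f

/-- A colored linear order has finitely many definable sets in every finite arity. -/
def CLOFinitelyManyDefinable (c : ι → Set M) : Prop :=
  letI := CLOStr ι M c
  FinitelyManyDefinable (CLOLang ι) M

/-- The complete type of a tuple in a colored linear order. -/
def cloTupleType (c : ι → Set M) {α : Type} (v : α → M) : Set ((CLOLang ι).Formula α) :=
  letI := CLOStr ι M c
  tupleType (CLOLang ι) v

namespace CLOElementaryRel

theorem mono {f g : Set (M × N)} (hg : CLOElementaryRel c d g) (h : f ⊆ g) :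
    CLOElementaryRel c d f :=
  let := CLOStr ι M c
  let := CLOStr ι N d
  IsElementaryRel.mono hg h

theorem swap {f : Set (M × N)} (hf : CLOElementaryRel c d f) :
    CLOElementaryRel d c (Prod.swap ⁻¹' f) :=
  let := CLOStr ι M c
  let := CLOStr ι N d
  IsElementaryRel.swap hf

theorem lt_iff {f : Set (M × N)} (hf : CLOElementaryRel c d f) {p q : M × N} (hp : p ∈ f)
    (hq : q ∈ f) : p.1 < q.1 ↔ p.2 < q.2 := by
  let := CLOStr ι M c
  let := CLOStr ι N d
  exact IsElementaryRel.relMap_iff hf (CLORel.lt : CLORel ι 2) ![p, q]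
    (Fin.forall_fin_two.2 ⟨hp, hq⟩)

theorem le_iff {f : Set (M × N)} (hf : CLOElementaryRel c d f) {p q : M × N} (hp : p ∈ f)
    (hq : q ∈ f) : p.1 ≤ q.1 ↔ p.2 ≤ q.2 := by
  rw [← not_lt, ← not_lt, hf.lt_iff hq hp]

theorem mem_color_iff {f : Set (M × N)} (hf : CLOElementaryRel c d f) {p : M × N} (hp : p ∈ f)
    (k : ι) : p.1 ∈ c k ↔ p.2 ∈ d k := by
  let := CLOStr ι M c
  let := CLOStr ι N d
  exact IsElementaryRel.relMap_iff hf (CLORel.color k : CLORel ι 1) ![p] fun i => by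
    rw [Subsingleton.elim i 0]
    exact hp

theorem of_backForth (F : Set (Set (M × N)))
    (hlt : ∀ f ∈ F, ∀ p ∈ f, ∀ q ∈ f, p.1 < q.1 ↔ p.2 < q.2)
    (hcolor : ∀ f ∈ F, ∀ p ∈ f, ∀ k, p.1 ∈ c k ↔ p.2 ∈ d k)
    (forth : ∀ f ∈ F, ∀ m : M, ∃ n : N, ∃ g ∈ F, f ⊆ g ∧ (m, n) ∈ g)
    (back : ∀ f ∈ F, ∀ n : N, ∃ m : M, ∃ g ∈ F, f ⊆ g ∧ (m, n) ∈ g)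
    {f : Set (M × N)} (hf : f ∈ F) : CLOElementaryRel c d f := by
  let := CLOStr ι M c
  let := CLOStr ι N d
  refine isElementaryRel_of_backForth (L := CLOLang ι) F ?_ ?_ forth back hf
  · intro f hf p hp q hq
    rw [eq_iff_le_not_lt, eq_iff_le_not_lt, ← not_lt, ← not_lt, hlt f hf p hp q hq,
      hlt f hf q hq p hp]
  · intro f hf n R w hw
    cases R with
    | lt => exact hlt f hf _ (hw 0) _ (hw 1)
    | color k => exact hcolor f hf _ (hw 0) k

theorem exists_insert (hd : CLOFinitelyManyDefinable d) {f : Set (M × N)}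
    (hf : CLOElementaryRel c d f) (hfin : f.Finite) (m : M) :
    ∃ n : N, CLOElementaryRel c d (insert (m, n) f) :=
  let := CLOStr ι M c
  let := CLOStr ι N d
  IsElementaryRel.exists_insert hd hf hfin m

theorem range_iff {α : Type} (v : α → M) (v' : α → N) :
    CLOElementaryRel c d (range fun a => (v a, v' a)) ↔ cloTupleType c v = cloTupleType d v' := by
  let := CLOStr ι M c
  let := CLOStr ι N d
  exact (isElementaryRel_range_iff (L := CLOLang ι) v v').trans Set.ext_iff.symm

end CLOElementaryRel

/-- A relation obtained by gluing two finite elementary relations along a common pair that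
lies above the first and below the second. -/
def IsGluedRel (c : ι → Set M) (d : ι → Set N) (r : M × N) (h : Set (M × N)) : Prop :=
  ∃ f g : Set (M × N), h = f ∪ g ∧
    (f.Finite ∧ CLOElementaryRel c d f ∧ r ∈ f ∧ ∀ p ∈ f, p.1 ≤ r.1) ∧
    g.Finite ∧ CLOElementaryRel c d g ∧ r ∈ g ∧ ∀ p ∈ g, r.1 ≤ p.1

theorem IsGluedRel.swap {r : M × N} {h : Set (M × N)} (hh : IsGluedRel c d r h) :
    IsGluedRel d c r.swap (Prod.swap ⁻¹' h) := by
  obtain ⟨f, g, rfl, ⟨hf, hfe, hrf, hfr⟩, hg, hge, hrg, hgr⟩ := hh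
  exact ⟨Prod.swap ⁻¹' f, Prod.swap ⁻¹' g, rfl,
    ⟨hf.preimage Prod.swap_injective.injOn, hfe.swap, by simpa using hrf,
      fun p hp => (hfe.le_iff hp hrf).1 (hfr _ hp)⟩,
    hg.preimage Prod.swap_injective.injOn, hge.swap, by simpa using hrg,
    fun p hp => (hge.le_iff hrg hp).1 (hgr _ hp)⟩

theorem IsGluedRel.lt_iff {r : M × N} {h : Set (M × N)} (hh : IsGluedRel c d r h) {p q : M × N}
    (hp : p ∈ h) (hq : q ∈ h) : p.1 < q.1 ↔ p.2 < q.2 := by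
  obtain ⟨f, g, rfl, ⟨hf, hfe, hrf, hfr⟩, hg, hge, hrg, hgr⟩ := hh
  have hfr' : ∀ p ∈ f, p.2 ≤ r.2 := fun p hp => (hfe.le_iff hp hrf).1 (hfr _ hp)
  have hgr' : ∀ p ∈ g, r.2 ≤ p.2 := fun p hp => (hge.le_iff hrg hp).1 (hgr _ hp)
  rcases hp with hp | hp <;> rcases hq with hq | hq
  · exact hfe.lt_iff hp hq
  · have h₁ : p.1 < q.1 ↔ p.1 < r.1 ∨ r.1 < q.1 := by
      have := hfr p hp
      have := hgr q hq
      grind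
    have h₂ : p.2 < q.2 ↔ p.2 < r.2 ∨ r.2 < q.2 := by
      have := hfr' p hp
      have := hgr' q hq
      grind
    rw [h₁, h₂, hfe.lt_iff hp hrf, hge.lt_iff hrg hq]
  · exact iff_of_false ((hfr q hq).trans (hgr p hp)).not_gt ((hfr' q hq).trans (hgr' p hp)).not_gt
  · exact hge.lt_iff hp hq

theorem IsGluedRel.exists_insert (hd : CLOFinitelyManyDefinable d) {r : M × N} {h : Set (M × N)}
    (hh : IsGluedRel c d r h) (m : M) :
    ∃ n, ∃ h', IsGluedRel c d r h' ∧ h ⊆ h' ∧ (m, n) ∈ h' := by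
  obtain ⟨f, g, rfl, ⟨hf, hfe, hrf, hfr⟩, hg, hge, hrg, hgr⟩ := hh
  rcases le_total m r.1 with hm | hm
  · obtain ⟨n, hn⟩ := hfe.exists_insert hd hf m
    exact ⟨n, insert (m, n) f ∪ g, ⟨_, _, rfl, ⟨hf.insert _, hn, Or.inr hrf,
      forall_mem_insert.2 ⟨hm, hfr⟩⟩, hg, hge, hrg, hgr⟩,
      union_subset_union_left _ (subset_insert _ _), Or.inl (Or.inl rfl)⟩
  · obtain ⟨n, hn⟩ := hge.exists_insert hd hg m
    exact ⟨n, f ∪ insert (m, n) g, ⟨_, _, rfl, ⟨hf, hfe, hrf, hfr⟩, hg.insert _, hn, Or.inr hrg,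
      forall_mem_insert.2 ⟨hm, hgr⟩⟩,
      union_subset_union_right _ (subset_insert _ _), Or.inr (Or.inl rfl)⟩

theorem IsGluedRel.cloElementaryRel (hc : CLOFinitelyManyDefinable c)
    (hd : CLOFinitelyManyDefinable d) {r : M × N} {h : Set (M × N)} (hh : IsGluedRel c d r h) :
    CLOElementaryRel c d h := by
  refine CLOElementaryRel.of_backForth {h | IsGluedRel c d r h}
    (fun h hh p hp q hq => hh.lt_iff hp hq) ?_ (fun h hh m => hh.exists_insert hd m) ?_ hh
  · rintro _ ⟨f, g, rfl, ⟨-, hfe, -⟩, -, hge, -⟩ p (hp | hp) k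
    exacts [hfe.mem_color_iff hp k, hge.mem_color_iff hp k]
  · intro h hh n
    obtain ⟨m, h', hh', hsub, hmem⟩ := hh.swap.exists_insert hc n
    exact ⟨m, Prod.swap ⁻¹' h', hh'.swap, fun p hp => hsub (by simpa using hp), hmem⟩

end ElementaryRelationsOfOrders

section ConvexSubsets

open Filter

theorem Ultrafilter.exists_eventually_eq_of_finite_range {P X : Type*} (U : Ultrafilter P)
    (f : P → X) (hf : (range f).Finite) : ∃ x, ∀ᶠ s : P in U, f s = x := by
  obtain ⟨x, -, hx⟩ := (U.eventually_exists_mem_iff hf (P := fun x s => f s = x)).1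
    (Eventually.of_forall fun s => ⟨f s, mem_range_self s, rfl⟩)
  exact ⟨x, hx⟩

/-- A coloring of pairs by finitely many colors admits a cofinal set in which every point sees
the same color cofinally often. -/
theorem exists_isCofinal_forall_color {P X : Type*} [LinearOrder P] [Nonempty P]
    (T : P → P → X) (hT : (range (Function.uncurry T)).Finite) :
    ∃ (G : Set P) (q : X), IsCofinal G ∧ ∀ r ∈ G, ∀ m, ∃ s ∈ G, m ≤ s ∧ T r s = q := by
  let U : Ultrafilter P := Ultrafilter.of atTop
  have hU : ∀ m, ∀ᶠ s : P in U, m ≤ s := fun m => Ultrafilter.of_le _ (eventually_ge_atTop m)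
  choose p hp using fun r => U.exists_eventually_eq_of_finite_range (T r)
    (hT.subset (range_subset_iff.2 fun s => ⟨(r, s), rfl⟩))
  have hpT : range p ⊆ range (Function.uncurry T) := by
    rintro _ ⟨r, rfl⟩
    obtain ⟨s, hs⟩ := (hp r).exists
    exact ⟨(r, s), hs⟩
  obtain ⟨q, hq⟩ := U.exists_eventually_eq_of_finite_range p (hT.subset hpT)
  refine ⟨{r | p r = q}, q, fun m => ?_, fun r hr m => ?_⟩
  · obtain ⟨s, hs, hms⟩ := (hq.and (hU m)).exists
    exact ⟨s, hs, hms⟩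
  · obtain ⟨s, hs, hms, hrs⟩ := (hq.and ((hU m).and (hp r))).exists
    exact ⟨s, hs, hms, hrs.trans hr⟩

variable {ι M : Type} [LinearOrder M] {c : ι → Set M} {B : Set M}

/-- The type in `M` of a pair of elements of `B`. -/
def pairType (c : ι → Set M) (r s : B) : Set ((CLOLang ι).Formula Bool) :=
  cloTupleType c fun b => cond b (r : M) s

/-- A set of points such that each of them has cofinally many successors in the set, all
realizing the same pair type over it. -/
def HomogeneousAbove (c : ι → Set M) (G : Set B) : Prop :=
  ∃ q, ∀ r ∈ G, ∀ m, ∃ s ∈ G, m ≤ s ∧ pairType c r s = q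

/-- The downward counterpart of `HomogeneousAbove`. -/
def HomogeneousBelow (c : ι → Set M) (G : Set B) : Prop :=
  ∃ q, ∀ r ∈ G, ∀ m, ∃ s ∈ G, s ≤ m ∧ pairType c r s = q

theorem finite_range_pairType (hc : CLOFinitelyManyDefinable c) :
    (range (Function.uncurry (pairType (B := B) c))).Finite := by
  let := CLOStr ι M c
  refine (FinitelyManyDefinable.finite_range_tupleType hc Bool).subset ?_
  rintro _ ⟨⟨r, s⟩, rfl⟩
  exact ⟨fun b => cond b (r : M) s, rfl⟩

theorem exists_homogeneousAbove [Nonempty B] (hc : CLOFinitelyManyDefinable c) :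
    ∃ G : Set B, (∀ m, ∃ r ∈ G, m ≤ r) ∧ HomogeneousAbove c G := by
  obtain ⟨G, q, hG, h⟩ := exists_isCofinal_forall_color _ (finite_range_pairType (B := B) hc)
  exact ⟨G, hG, q, h⟩

theorem exists_homogeneousBelow [Nonempty B] (hc : CLOFinitelyManyDefinable c) :
    ∃ G : Set B, (∀ m, ∃ r ∈ G, r ≤ m) ∧ HomogeneousBelow c G := by
  obtain ⟨G, q, hG, h⟩ := exists_isCofinal_forall_color (P := Bᵒᵈ)
    (fun r s => pairType c (OrderDual.ofDual r) (OrderDual.ofDual s))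
    (finite_range_pairType (B := B) hc)
  exact ⟨OrderDual.toDual ⁻¹' G, hG, q, h⟩

theorem CLOElementaryRel.of_pairType_eq {r s r' s' : B} (h : pairType c r s = pairType c r' s') :
    CLOElementaryRel c c {((r : M), (r' : M)), ((s : M), (s' : M))} := by
  refine ((CLOElementaryRel.range_iff _ _).2 h).mono ?_
  rintro p (rfl | rfl)
  exacts [⟨true, rfl⟩, ⟨false, rfl⟩]

/-- A finite relation on `B`, elementary in `M`, whose least and greatest pairs come from
prescribed sets. -/
structure IsEndMatched (c : ι → Set M) (Gl Gr : Set B) (h : Set (B × B)) : Prop where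
  finite : h.Finite
  elementary : CLOElementaryRel c c (Prod.map Subtype.val Subtype.val '' h)
  exists_least : ∃ e ∈ h, e.1 ∈ Gl ∧ e.2 ∈ Gl ∧ ∀ p ∈ h, e.1 ≤ p.1
  exists_greatest : ∃ e ∈ h, e.1 ∈ Gr ∧ e.2 ∈ Gr ∧ ∀ p ∈ h, p.1 ≤ e.1

namespace IsEndMatched

variable {Gl Gr : Set B} {h : Set (B × B)}

theorem lt_iff (hh : IsEndMatched c Gl Gr h) {p q : B × B} (hp : p ∈ h) (hq : q ∈ h) :
    p.1 < q.1 ↔ p.2 < q.2 :=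
  hh.elementary.lt_iff (mem_image_of_mem _ hp) (mem_image_of_mem _ hq)

theorem le_iff (hh : IsEndMatched c Gl Gr h) {p q : B × B} (hp : p ∈ h) (hq : q ∈ h) :
    p.1 ≤ q.1 ↔ p.2 ≤ q.2 :=
  hh.elementary.le_iff (mem_image_of_mem _ hp) (mem_image_of_mem _ hq)

theorem swap (hh : IsEndMatched c Gl Gr h) : IsEndMatched c Gl Gr (Prod.swap ⁻¹' h) where
  finite := hh.finite.preimage Prod.swap_injective.injOn
  elementary := hh.elementary.swap.mono (by
    rintro _ ⟨p, hp, rfl⟩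
    exact ⟨p.swap, hp, rfl⟩)
  exists_least := by
    obtain ⟨e, he, h₁, h₂, hle⟩ := hh.exists_least
    exact ⟨e.swap, by simpa using he, h₂, h₁, fun p hp => (hh.le_iff he hp).1 (hle _ hp)⟩
  exists_greatest := by
    obtain ⟨e, he, h₁, h₂, hle⟩ := hh.exists_greatest
    exact ⟨e.swap, by simpa using he, h₂, h₁, fun p hp => (hh.le_iff hp he).1 (hle _ hp)⟩

theorem exists_extend_above (hh : IsEndMatched c Gl Gr h) (hc : CLOFinitelyManyDefinable c)
    (hGr : HomogeneousAbove c Gr) (m : B) :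
    ∃ h', IsEndMatched c Gl Gr h' ∧ h ⊆ h' ∧ ∃ e ∈ h', m ≤ e.1 := by
  obtain ⟨q, hq⟩ := hGr
  obtain ⟨e, he, h₁, h₂, hle⟩ := hh.exists_greatest
  obtain ⟨s, hs, hms, hsq⟩ := hq e.1 h₁ (max m e.1)
  obtain ⟨s', hs', hms', hsq'⟩ := hq e.2 h₂ e.2
  have hes : e.1 ≤ s := (le_max_right _ _).trans hms
  refine ⟨insert (s, s') h, ⟨hh.finite.insert _, ?_, ?_, ?_⟩, subset_insert _ _,
    (s, s'), Or.inl rfl, (le_max_left _ _).trans hms⟩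
  · refine CLOElementaryRel.mono (IsGluedRel.cloElementaryRel hc hc (r := (e.1.1, e.2.1))
      ⟨_, _, rfl, ⟨hh.finite.image _, hh.elementary, mem_image_of_mem _ he, ?_⟩, toFinite _,
        .of_pairType_eq (hsq.trans hsq'.symm), Or.inl rfl, ?_⟩) ?_
    · rintro _ ⟨p, hp, rfl⟩
      exact hle p hp
    · rintro _ (rfl | rfl)
      exacts [le_rfl, hes]
    · rintro _ ⟨p, rfl | hp, rfl⟩
      exacts [Or.inr (Or.inr rfl), Or.inl (mem_image_of_mem _ hp)]
  · obtain ⟨l, hl, hl₁, hl₂, hll⟩ := hh.exists_least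
    exact ⟨l, Or.inr hl, hl₁, hl₂, forall_mem_insert.2 ⟨(hll e he).trans hes, hll⟩⟩
  · exact ⟨(s, s'), Or.inl rfl, hs, hs', forall_mem_insert.2
      ⟨le_rfl, fun p hp => (hle p hp).trans hes⟩⟩

theorem exists_extend_below (hh : IsEndMatched c Gl Gr h) (hc : CLOFinitelyManyDefinable c)
    (hGl : HomogeneousBelow c Gl) (m : B) :
    ∃ h', IsEndMatched c Gl Gr h' ∧ h ⊆ h' ∧ ∃ e ∈ h', e.1 ≤ m := by
  obtain ⟨q, hq⟩ := hGl
  obtain ⟨e, he, h₁, h₂, hle⟩ := hh.exists_least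
  obtain ⟨s, hs, hms, hsq⟩ := hq e.1 h₁ (min m e.1)
  obtain ⟨s', hs', hms', hsq'⟩ := hq e.2 h₂ e.2
  have hes : s ≤ e.1 := hms.trans (min_le_right _ _)
  refine ⟨insert (s, s') h, ⟨hh.finite.insert _, ?_, ?_, ?_⟩, subset_insert _ _,
    (s, s'), Or.inl rfl, hms.trans (min_le_left _ _)⟩
  · refine CLOElementaryRel.mono (IsGluedRel.cloElementaryRel hc hc (r := (e.1.1, e.2.1))
      ⟨_, _, rfl, ⟨toFinite _, .of_pairType_eq (hsq.trans hsq'.symm), Or.inl rfl, ?_⟩,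
        hh.finite.image _, hh.elementary, mem_image_of_mem _ he, ?_⟩) ?_
    · rintro _ (rfl | rfl)
      exacts [le_rfl, hes]
    · rintro _ ⟨p, hp, rfl⟩
      exact hle p hp
    · rintro _ ⟨p, rfl | hp, rfl⟩
      exacts [Or.inl (Or.inr rfl), Or.inr (mem_image_of_mem _ hp)]
  · exact ⟨(s, s'), Or.inl rfl, hs, hs', forall_mem_insert.2
      ⟨le_rfl, fun p hp => hes.trans (hle p hp)⟩⟩
  · obtain ⟨l, hl, hl₁, hl₂, hll⟩ := hh.exists_greatest
    exact ⟨l, Or.inr hl, hl₁, hl₂, forall_mem_insert.2 ⟨hes.trans (hll e he), hll⟩⟩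

theorem exists_insert (hh : IsEndMatched c Gl Gr h) (hc : CLOFinitelyManyDefinable c)
    (hB : B.OrdConnected) (hGl : HomogeneousBelow c Gl) (hGr : HomogeneousAbove c Gr) (m : B) :
    ∃ n, ∃ h', IsEndMatched c Gl Gr h' ∧ h ⊆ h' ∧ (m, n) ∈ h' := by
  obtain ⟨h₁, hh₁, hsub₁, r, hr, hmr⟩ := hh.exists_extend_above hc hGr m
  obtain ⟨h₂, hh₂, hsub₂, l, hl, hlm⟩ := hh₁.exists_extend_below hc hGl m
  obtain ⟨n, hn⟩ := hh₂.elementary.exists_insert hc (hh₂.finite.image _) (m : M)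
  have hln : (l.2 : M) ≤ n :=
    (hn.le_iff (Or.inr (mem_image_of_mem _ hl)) (mem_insert _ _)).1 hlm
  have hnr : n ≤ (r.2 : M) :=
    (hn.le_iff (mem_insert _ _) (Or.inr (mem_image_of_mem _ (hsub₂ hr)))).1 hmr
  have hnB : n ∈ B := hB.out l.2.2 r.2.2 ⟨hln, hnr⟩
  refine ⟨⟨n, hnB⟩, insert (m, ⟨n, hnB⟩) h₂, ⟨hh₂.finite.insert _, ?_, ?_, ?_⟩,
    (hsub₁.trans hsub₂).trans (subset_insert _ _), Or.inl rfl⟩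
  · rwa [image_insert_eq]
  · obtain ⟨e, he, he₁, he₂, hle⟩ := hh₂.exists_least
    exact ⟨e, Or.inr he, he₁, he₂, forall_mem_insert.2 ⟨(hle l hl).trans hlm, hle⟩⟩
  · obtain ⟨e, he, he₁, he₂, hle⟩ := hh₂.exists_greatest
    exact ⟨e, Or.inr he, he₁, he₂, forall_mem_insert.2 ⟨hmr.trans (hle r (hsub₂ hr)), hle⟩⟩

/-- End-matched relations are elementary for the induced structure on a convex set. -/
theorem cloElementaryRel (hh : IsEndMatched c Gl Gr h) (hc : CLOFinitelyManyDefinable c)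
    (hB : B.OrdConnected) (hGl : HomogeneousBelow c Gl) (hGr : HomogeneousAbove c Gr) :
    CLOElementaryRel (subColor c B) (subColor c B) h := by
  refine CLOElementaryRel.of_backForth {h | IsEndMatched c Gl Gr h}
    (fun h hh p hp q hq => hh.lt_iff hp hq)
    (fun h hh p hp => hh.elementary.mem_color_iff (mem_image_of_mem _ hp))
    (fun h hh m => hh.exists_insert hc hB hGl hGr m) (fun h hh n => ?_) hh
  obtain ⟨m, h', hh', hsub, hmem⟩ := hh.swap.exists_insert hc hB hGl hGr n
  exact ⟨m, Prod.swap ⁻¹' h', hh'.swap, fun p hp => hsub (by simpa using hp), hmem⟩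

end IsEndMatched

/-- Having finitely many definable sets passes to nonempty convex subsets. -/
theorem CLOFinitelyManyDefinable.subColor (hc : CLOFinitelyManyDefinable c)
    (hB : B.OrdConnected) (hne : B.Nonempty) : CLOFinitelyManyDefinable (subColor c B) := by
  have := hne.to_subtype
  obtain ⟨Gl, hGl, hGl'⟩ := exists_homogeneousBelow (B := B) hc
  obtain ⟨Gr, hGr, hGr'⟩ := exists_homogeneousAbove (B := B) hc
  let := CLOStr ι M c
  let := CLOStr ι B (_root_.subColor c B)
  refine finitelyManyDefinable_of_finite_tupleType fun α _ => ?_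
  have hends : ∀ v : α → B, ∃ l ∈ Gl, ∃ r ∈ Gr, l ≤ r ∧ ∀ a, l ≤ v a ∧ v a ≤ r := by
    intro v
    obtain ⟨x, hx⟩ := (finite_range v).bddBelow
    obtain ⟨l, hl, hlx⟩ := hGl x
    obtain ⟨y, hy⟩ := ((finite_range v).insert l).bddAbove
    obtain ⟨r, hr, hyr⟩ := hGr y
    exact ⟨l, hl, r, hr, (hy (Or.inl rfl)).trans hyr, fun a =>
      ⟨hlx.trans (hx ⟨a, rfl⟩), (hy (Or.inr ⟨a, rfl⟩)).trans hyr⟩⟩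
  choose l hl r hr hlr hv using hends
  let u : (α → B) → α ⊕ Bool → B := fun v => Sum.elim v fun b => cond b (l v) (r v)
  have hu : ∀ v a, l v ≤ u v a ∧ u v a ≤ r v := by
    rintro v (a | _ | _)
    exacts [hv v a, ⟨hlr v, le_rfl⟩, ⟨le_rfl, hlr v⟩]
  let I : (α → B) → Set ((CLOLang ι).Formula (α ⊕ Bool)) := fun v =>
    cloTupleType c fun a => (u v a : M)
  have hfac : Function.FactorsThrough (tupleType (CLOLang ι) : (α → B) → _) I := by
    intro v v' hvv
    have hmatch : IsEndMatched c Gl Gr (range fun a => (u v a, u v' a)) :=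
      { finite := finite_range _
        elementary := ((CLOElementaryRel.range_iff _ _).2 hvv).mono (by
          rintro _ ⟨_, ⟨a, rfl⟩, rfl⟩
          exact ⟨a, rfl⟩)
        exists_least :=
          ⟨_, ⟨Sum.inr true, rfl⟩, hl v, hl v', forall_mem_range.2 fun a => (hu v a).1⟩
        exists_greatest :=
          ⟨_, ⟨Sum.inr false, rfl⟩, hr v, hr v', forall_mem_range.2 fun a => (hu v a).2⟩ }
    refine (CLOElementaryRel.range_iff v v').1
      ((hmatch.cloElementaryRel hc hB hGl' hGr').mono ?_)
    rintro _ ⟨a, rfl⟩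
    exact ⟨Sum.inl a, rfl⟩
  have hI : (range I).Finite :=
    (FinitelyManyDefinable.finite_range_tupleType hc (α ⊕ Bool)).subset
      (range_subset_iff.2 fun v => ⟨fun a => (u v a : M), rfl⟩)
  refine (hI.image (Function.extend I (tupleType (CLOLang ι)) fun _ => ∅)).subset ?_
  rintro _ ⟨v, rfl⟩
  exact ⟨_, ⟨v, rfl⟩, hfac.extend_apply _ v⟩

end ConvexSubsets

theorem stmt5 {ι : Type} [Countable ι] {M : Type} [LinearOrder M] (c : ι → Set M)
    (hM : Aleph0CatTheory ι (CLOTheory ι M c))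
    (B : Set M) (hB : B.OrdConnected) (hne : B.Nonempty) :
    Aleph0CatTheory ι (CLOTheory ι (↥B) (subColor c B)) := by
  have : Nonempty M := hne.to_type
  have hfin : CLOFinitelyManyDefinable (subColor c B) :=
    CLOFinitelyManyDefinable.subColor (hM.finitelyManyDefinable c) hB hne
  intro N₁ N₂ _ _ c₁ c₂ _ _ h₁ h₂
  let := CLOStr ι B (subColor c B)
  let := CLOStr ι N₁ c₁
  let := CLOStr ι N₂ c₂
  exact nonempty_equiv_of_finitelyManyDefinable
    (FinitelyManyDefinable.of_completeTheory_eq hfin h₁.symm)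
    (FinitelyManyDefinable.of_completeTheory_eq hfin h₂.symm) (h₁.trans h₂.symm)
end

section
/- Let A be a CLO with more than one element. The following are equivalent: (i) the only convex subsets of A definable without parameters are ∅ and A; (ii) for every nonempty linear order (J,<) and every family of CLOs A_j (j ∈ J) with A_j elementarily equivalent to A, each canonical embedding A_j → Σ_{j∈J} A_j is an elementary embedding (in particular, Σ_{j∈J} A_j is elementarily equivalent to A). -/
open FirstOrder Language Set

/-- The finite set of possible rank `n` types of a linear order colored by `C`. -/
def RankType (C : Type) : ℕ → Type
  | 0 => Unit
  | n + 1 => Set (C × RankType C n × RankType C n)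

instance RankType.finite (C : Type) [Finite C] : ∀ n, Finite (RankType C n)
  | 0 => inferInstanceAs (Finite Unit)
  | n + 1 =>
    have := RankType.finite C n
    inferInstanceAs (Finite (Set (C × RankType C n × RankType C n)))

/-- The rank `n` type of a subset of a colored linear order: it records the color of each point
together with the rank `n - 1` types of the parts below and above that point. -/
def rankType {C X : Type} [LinearOrder X] (f : X → C) : ∀ n, Set X → RankType C n
  | 0, _ => ()
  | n + 1, s => {p | ∃ x ∈ s, (f x, rankType f n (s ∩ Iio x), rankType f n (s ∩ Ioi x)) = p}

section RankType

variable {C : Type}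

/-- Every point of `s` is matched by a point of `t`, up to rank `n`. -/
def Forth {X Y : Type} [LinearOrder X] [LinearOrder Y] (f : X → C) (g : Y → C) (n : ℕ)
    (s : Set X) (t : Set Y) : Prop :=
  ∀ x ∈ s, ∃ y ∈ t, f x = g y ∧ rankType f n (s ∩ Iio x) = rankType g n (t ∩ Iio y) ∧
    rankType f n (s ∩ Ioi x) = rankType g n (t ∩ Ioi y)

variable {X Y : Type} [LinearOrder X] [LinearOrder Y] {f : X → C} {g : Y → C}

theorem rankType_succ_eq {n : ℕ} {s : Set X} {τ : Set (C × RankType C n × RankType C n)} :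
    rankType f (n + 1) s = τ ↔ ∀ p : C × RankType C n × RankType C n,
      (∃ x ∈ s, (f x, rankType f n (s ∩ Iio x), rankType f n (s ∩ Ioi x)) = p) ↔ p ∈ τ :=
  Set.ext_iff

theorem forth_of_rankType_eq {n : ℕ} {s : Set X} {t : Set Y}
    (h : rankType f (n + 1) s = rankType g (n + 1) t) : Forth f g n s t := by
  intro x hx
  obtain ⟨y, hy, e⟩ := (rankType_succ_eq.1 h _).1 ⟨x, hx, rfl⟩
  simp only [Prod.mk.injEq] at e
  exact ⟨y, hy, e.1.symm, e.2.1.symm, e.2.2.symm⟩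

theorem rankType_succ_eq_iff {n : ℕ} {s : Set X} {t : Set Y} :
    rankType f (n + 1) s = rankType g (n + 1) t ↔ Forth f g n s t ∧ Forth g f n t s := by
  constructor
  · exact fun h => ⟨forth_of_rankType_eq h, forth_of_rankType_eq h.symm⟩
  · rintro ⟨h1, h2⟩
    refine Set.ext (α := C × RankType C n × RankType C n) fun p => ⟨?_, ?_⟩
    · rintro ⟨x, hx, rfl⟩
      obtain ⟨y, hy, e1, e2, e3⟩ := h1 x hx
      exact ⟨y, hy, by rw [e1, e2, e3]⟩
    · rintro ⟨x, hx, rfl⟩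
      obtain ⟨y, hy, e1, e2, e3⟩ := h2 x hx
      exact ⟨y, hy, by rw [e1, e2, e3]⟩

theorem rankType_eq_of_succ (n : ℕ) : ∀ {s : Set X} {t : Set Y},
    rankType f (n + 1) s = rankType g (n + 1) t → rankType f n s = rankType g n t := by
  induction n with
  | zero => exact fun _ => rfl
  | succ n ih =>
    intro s t h
    rw [rankType_succ_eq_iff] at h ⊢
    constructor
    · intro x hx
      obtain ⟨y, hy, e1, e2, e3⟩ := h.1 x hx
      exact ⟨y, hy, e1, ih e2, ih e3⟩
    · intro x hx
      obtain ⟨y, hy, e1, e2, e3⟩ := h.2 x hx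
      exact ⟨y, hy, e1, (ih e2.symm).symm, (ih e3.symm).symm⟩

theorem rankType_image {e : X → Y} (he : StrictMono e) (hc : ∀ x, g (e x) = f x) (n : ℕ) :
    ∀ s : Set X, rankType g n (e '' s) = rankType f n s := by
  induction n with
  | zero => exact fun _ => rfl
  | succ n ih =>
    intro s
    have hlo : ∀ x, e '' s ∩ Iio (e x) = e '' (s ∩ Iio x) := by
      intro x
      ext y
      constructor
      · rintro ⟨⟨z, hz, rfl⟩, hy⟩
        exact ⟨z, ⟨hz, he.lt_iff_lt.1 hy⟩, rfl⟩
      · rintro ⟨z, ⟨hz, hzx⟩, rfl⟩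
        exact ⟨⟨z, hz, rfl⟩, he hzx⟩
    have hhi : ∀ x, e '' s ∩ Ioi (e x) = e '' (s ∩ Ioi x) := by
      intro x
      ext y
      constructor
      · rintro ⟨⟨z, hz, rfl⟩, hy⟩
        exact ⟨z, ⟨hz, he.lt_iff_lt.1 hy⟩, rfl⟩
      · rintro ⟨z, ⟨hz, hzx⟩, rfl⟩
        exact ⟨⟨z, hz, rfl⟩, he hzx⟩
    rw [rankType_succ_eq_iff]
    constructor
    · rintro _ ⟨x, hx, rfl⟩
      exact ⟨x, hx, hc x, by rw [hlo, ih], by rw [hhi, ih]⟩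
    · intro x hx
      exact ⟨e x, ⟨x, hx, rfl⟩, (hc x).symm, by rw [hlo, ih], by rw [hhi, ih]⟩

theorem union_inter_Iio_left {s₁ s₂ : Set X} (h : ∀ a ∈ s₁, ∀ b ∈ s₂, a < b) {x : X}
    (hx : x ∈ s₁) : (s₁ ∪ s₂) ∩ Iio x = s₁ ∩ Iio x := by
  ext y
  simp only [mem_inter_iff, mem_union, mem_Iio]
  refine ⟨fun ⟨h1, h2⟩ => ⟨h1.resolve_right fun h3 => ?_, h2⟩, fun ⟨h1, h2⟩ => ⟨.inl h1, h2⟩⟩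
  exact lt_asymm h2 (h x hx y h3)

theorem union_inter_Ioi_left {s₁ s₂ : Set X} (h : ∀ a ∈ s₁, ∀ b ∈ s₂, a < b) {x : X}
    (hx : x ∈ s₁) : (s₁ ∪ s₂) ∩ Ioi x = (s₁ ∩ Ioi x) ∪ s₂ := by
  ext y
  simp only [mem_inter_iff, mem_union, mem_Ioi]
  have := h x hx y
  tauto

theorem union_inter_Iio_right {s₁ s₂ : Set X} (h : ∀ a ∈ s₁, ∀ b ∈ s₂, a < b) {x : X}
    (hx : x ∈ s₂) : (s₁ ∪ s₂) ∩ Iio x = s₁ ∪ (s₂ ∩ Iio x) := by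
  ext y
  simp only [mem_inter_iff, mem_union, mem_Iio]
  have := fun hy => h y hy x hx
  tauto

theorem union_inter_Ioi_right {s₁ s₂ : Set X} (h : ∀ a ∈ s₁, ∀ b ∈ s₂, a < b) {x : X}
    (hx : x ∈ s₂) : (s₁ ∪ s₂) ∩ Ioi x = s₂ ∩ Ioi x := by
  ext y
  simp only [mem_inter_iff, mem_union, mem_Ioi]
  refine ⟨fun ⟨h1, h2⟩ => ⟨h1.resolve_left fun h3 => ?_, h2⟩, fun ⟨h1, h2⟩ => ⟨.inr h1, h2⟩⟩
  exact lt_asymm h2 (h y h3 x hx)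

theorem rankType_union (n : ℕ) : ∀ {X Y : Type} [LinearOrder X] [LinearOrder Y] {f : X → C}
    {g : Y → C} {s₁ s₂ : Set X} {t₁ t₂ : Set Y}, (∀ a ∈ s₁, ∀ b ∈ s₂, a < b) →
    (∀ a ∈ t₁, ∀ b ∈ t₂, a < b) → rankType f n s₁ = rankType g n t₁ →
    rankType f n s₂ = rankType g n t₂ → rankType f n (s₁ ∪ s₂) = rankType g n (t₁ ∪ t₂) := by
  induction n with
  | zero => intros; rfl
  | succ n ih =>
    have forth : ∀ {X Y : Type} [LinearOrder X] [LinearOrder Y] {f : X → C}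
        {g : Y → C} {s₁ s₂ : Set X} {t₁ t₂ : Set Y}, (∀ a ∈ s₁, ∀ b ∈ s₂, a < b) →
        (∀ a ∈ t₁, ∀ b ∈ t₂, a < b) → rankType f (n + 1) s₁ = rankType g (n + 1) t₁ →
        rankType f (n + 1) s₂ = rankType g (n + 1) t₂ →
        Forth f g n (s₁ ∪ s₂) (t₁ ∪ t₂) := by
      intro X Y _ _ f g s₁ s₂ t₁ t₂ hs ht h1 h2 x hx
      rcases hx with hx | hx
      · obtain ⟨y, hy, e1, e2, e3⟩ := (rankType_succ_eq_iff.1 h1).1 x hx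
        refine ⟨y, .inl hy, e1, ?_, ?_⟩
        · rwa [union_inter_Iio_left hs hx, union_inter_Iio_left ht hy]
        · rw [union_inter_Ioi_left hs hx, union_inter_Ioi_left ht hy]
          exact ih (fun a ha => hs a ha.1) (fun a ha => ht a ha.1) e3 (rankType_eq_of_succ n h2)
      · obtain ⟨y, hy, e1, e2, e3⟩ := (rankType_succ_eq_iff.1 h2).1 x hx
        refine ⟨y, .inr hy, e1, ?_, ?_⟩
        · rw [union_inter_Iio_right hs hx, union_inter_Iio_right ht hy]
          exact ih (fun a ha b hb => hs a ha b hb.1) (fun a ha b hb => ht a ha b hb.1)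
            (rankType_eq_of_succ n h1) e2
        · rwa [union_inter_Ioi_right hs hx, union_inter_Ioi_right ht hy]
    intro X Y _ _ f g s₁ s₂ t₁ t₂ hs ht h1 h2
    exact rankType_succ_eq_iff.2 ⟨forth hs ht h1 h2, forth ht hs h1.symm h2.symm⟩

/-- Every point above `a` has the same rank `n` type over `a` as some point in `(a, u)`. -/
def UpBound (f : X → C) (n : ℕ) (a u : X) : Prop :=
  ∀ x, a < x → ∃ y, a < y ∧ y < u ∧ f x = f y ∧
    rankType f n (Ioo a x) = rankType f n (Ioo a y) ∧ rankType f n (Ioi x) = rankType f n (Ioi y)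

/-- Every point below `z` has the same rank `n` type over `z` as some point in `(u, z)`. -/
def DownBound (f : X → C) (n : ℕ) (u z : X) : Prop :=
  ∀ x, x < z → ∃ y, u < y ∧ y < z ∧ f x = f y ∧
    rankType f n (Ioo x z) = rankType f n (Ioo y z) ∧ rankType f n (Iio x) = rankType f n (Iio y)

theorem Ioo_split {a b c : X} (hab : a < b) (hbc : b < c) :
    Ioo a c = Ioc a b ∪ Ioo b c := by
  ext x
  simp only [mem_Ioo, mem_union, mem_Ioc]
  constructor
  · rintro ⟨h1, h2⟩
    exact (le_or_gt x b).imp (fun h => ⟨h1, h⟩) fun h => ⟨h, h2⟩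
  · rintro (⟨h1, h2⟩ | ⟨h1, h2⟩)
    exacts [⟨h1, h2.trans_lt hbc⟩, ⟨hab.trans h1, h2⟩]

theorem Ioo_split_left {a b c : X} (hab : a < b) (hbc : b < c) :
    Ioo a c = Ioo a b ∪ Ico b c := by
  ext x
  simp only [mem_Ioo, mem_union, mem_Ico]
  constructor
  · rintro ⟨h1, h2⟩
    exact (lt_or_ge x b).imp (fun h => ⟨h1, h⟩) fun h => ⟨h, h2⟩
  · rintro (⟨h1, h2⟩ | ⟨h1, h2⟩)
    exacts [⟨h1, h2.trans hbc⟩, ⟨hab.trans_le h1, h2⟩]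

theorem UpBound.mono {n : ℕ} {a a' u u' : X} (h : UpBound f n a u) (hau : a < u) (ha : a' ≤ a)
    (hu : u ≤ u') : UpBound f n a' u' := by
  intro x hx
  rcases le_or_gt x a with hxa | hxa
  · exact ⟨x, hx, (hxa.trans_lt hau).trans_le hu, rfl, rfl, rfl⟩
  · obtain ⟨y, h1, h2, h3, h4, h5⟩ := h x hxa
    refine ⟨y, ha.trans_lt h1, h2.trans_le hu, h3, ?_, h5⟩
    rcases ha.eq_or_lt with rfl | ha
    · exact h4
    · rw [Ioo_split ha hxa, Ioo_split ha h1]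
      exact rankType_union n (fun p hp q hq => hp.2.trans_lt hq.1)
        (fun p hp q hq => hp.2.trans_lt hq.1) rfl h4

theorem DownBound.mono {n : ℕ} {z z' u u' : X} (h : DownBound f n u z) (huz : u < z) (hz : z ≤ z')
    (hu : u' ≤ u) : DownBound f n u' z' := by
  intro x hx
  rcases le_or_gt z x with hxz | hxz
  · exact ⟨x, hu.trans_lt (huz.trans_le hxz), hx, rfl, rfl, rfl⟩
  · obtain ⟨y, h1, h2, h3, h4, h5⟩ := h x hxz
    refine ⟨y, hu.trans_lt h1, h2.trans_le hz, h3, ?_, h5⟩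
    rcases hz.eq_or_lt with rfl | hz
    · exact h4
    · rw [Ioo_split_left hxz hz, Ioo_split_left h2 hz]
      exact rankType_union n (fun p hp q hq => hp.2.trans_le hq.1)
        (fun p hp q hq => hp.2.trans_le hq.1) h4 rfl

theorem exists_representatives {X T : Type} [Finite T] (F : X → T) (p : X → Prop) :
    ∃ s : Set X, s.Finite ∧ ∀ x, p x → ∃ y ∈ s, p y ∧ F x = F y := by
  classical
  have h : ∀ t : T, ∃ y : Option X, ∀ x, p x → F x = t → ∃ z ∈ y, p z ∧ F x = F z := by
    intro t
    by_cases ht : ∃ x, p x ∧ F x = t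
    · obtain ⟨z, hz, rfl⟩ := ht
      exact ⟨some z, fun x _ hx => ⟨z, rfl, hz, hx⟩⟩
    · exact ⟨none, fun x hp hx => absurd ⟨x, hp, hx⟩ ht⟩
  choose r hr using h
  refine ⟨some ⁻¹' Set.range r,
    (Set.finite_range r).preimage (Option.some_injective X).injOn, fun x hx => ?_⟩
  obtain ⟨z, hz, hpz, e⟩ := hr (F x) x hx rfl
  exact ⟨z, ⟨F x, hz⟩, hpz, e⟩

theorem exists_upBound [Finite C] [NoMaxOrder X] (f : X → C) (n : ℕ) (a : X) :
    ∃ u, a < u ∧ UpBound f n a u := by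
  obtain ⟨s, hs, h⟩ := exists_representatives
    (fun x => (f x, rankType f n (Ioo a x), rankType f n (Ioi x))) (a < ·)
  have : Nonempty X := ⟨a⟩
  obtain ⟨b, hb⟩ := (hs.insert a).bddAbove
  obtain ⟨u, hu⟩ := exists_gt b
  refine ⟨u, (hb (mem_insert a s)).trans_lt hu, fun x hx => ?_⟩
  obtain ⟨y, hy, hay, e⟩ := h x hx
  simp only [Prod.mk.injEq] at e
  exact ⟨y, hay, (hb (mem_insert_of_mem a hy)).trans_lt hu, e⟩

theorem exists_downBound [Finite C] [NoMinOrder X] (f : X → C) (n : ℕ) (z : X) :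
    ∃ u, u < z ∧ DownBound f n u z := by
  obtain ⟨s, hs, h⟩ := exists_representatives
    (fun x => (f x, rankType f n (Ioo x z), rankType f n (Iio x))) (· < z)
  have : Nonempty X := ⟨z⟩
  obtain ⟨b, hb⟩ := (hs.insert z).bddBelow
  obtain ⟨u, hu⟩ := exists_lt b
  refine ⟨u, hu.trans_le (hb (mem_insert z s)), fun x hx => ?_⟩
  obtain ⟨y, hy, hay, e⟩ := h x hx
  simp only [Prod.mk.injEq] at e
  exact ⟨y, hu.trans_le (hb (mem_insert_of_mem z hy)), hay, e⟩

/-- `a` lies far below `z`, up to rank `n`. -/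
def FarBelow (f : X → C) : ℕ → X → X → Prop
  | 0, a, z => a < z
  | n + 1, a, z => ∃ u v w, a < u ∧ UpBound f n a u ∧ FarBelow f n u v ∧ FarBelow f n v w ∧
      w < z ∧ DownBound f n w z

theorem FarBelow.lt : ∀ {n : ℕ} {a z : X}, FarBelow f n a z → a < z
  | 0, _, _, h => h
  | _ + 1, _, _, ⟨_, _, _, h1, _, h3, h4, h5, _⟩ => h1.trans (h3.lt.trans (h4.lt.trans h5))

theorem FarBelow.mono {n : ℕ} {a a' z z' : X} (h : FarBelow f n a z) (ha : a' ≤ a)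
    (hz : z ≤ z') : FarBelow f n a' z' := by
  cases n with
  | zero => exact ha.trans_lt (lt_of_lt_of_le h hz)
  | succ n =>
    obtain ⟨u, v, w, h1, h2, h3, h4, h5, h6⟩ := h
    exact ⟨u, v, w, ha.trans_lt h1, h2.mono h1 ha le_rfl, h3, h4, h5.trans_le hz,
      h6.mono h5 hz le_rfl⟩

theorem Ioo_inter_Iio' {a x z : X} (hx : x ≤ z) : Ioo a z ∩ Iio x = Ioo a x := by
  ext y
  simp only [mem_inter_iff, mem_Ioo, mem_Iio]
  exact ⟨fun h => ⟨h.1.1, h.2⟩, fun h => ⟨⟨h.1, h.2.trans_le hx⟩, h.2⟩⟩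

theorem Ioo_inter_Ioi' {a x z : X} (hx : a ≤ x) : Ioo a z ∩ Ioi x = Ioo x z := by
  ext y
  simp only [mem_inter_iff, mem_Ioo, mem_Ioi]
  exact ⟨fun h => ⟨h.2, h.1.2⟩, fun h => ⟨⟨hx.trans_lt h.1, h.2⟩, h.1⟩⟩

theorem Ioi_inter_Ioi' {a x : X} (hx : a ≤ x) : Ioi a ∩ Ioi x = Ioi x :=
  inter_eq_right.2 (Ioi_subset_Ioi hx)

theorem Iio_inter_Iio' {z x : X} (hx : x ≤ z) : Iio z ∩ Iio x = Iio x :=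
  inter_eq_right.2 (Iio_subset_Iio hx)

/-- If `a` is far below `z`, then `(a, z)` looks like the sum of `(a, ∞)` and `(-∞, z)`. -/
theorem FarBelow.rankType_Ioo (n : ℕ) : ∀ {a z : X} {t₁ t₂ : Set Y}, FarBelow f n a z →
    (∀ p ∈ t₁, ∀ q ∈ t₂, p < q) → rankType f n (Ioi a) = rankType g n t₁ →
    rankType f n (Iio z) = rankType g n t₂ →
    rankType f n (Ioo a z) = rankType g n (t₁ ∪ t₂) := by
  induction n with
  | zero => intros; rfl
  | succ n ih =>
    intro a z t₁ t₂ h ht h₁ h₂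
    have h₁' := rankType_eq_of_succ n h₁
    have h₂' := rankType_eq_of_succ n h₂
    obtain ⟨u, v, w, hau, hup, huv, hvw, hwz, hdn⟩ := h
    rw [rankType_succ_eq_iff] at h₁ h₂ ⊢
    constructor
    · rintro x ⟨hax, hxz⟩
      rcases le_or_gt x v with hxv | hxv
      · obtain ⟨y, hy, e1, e2, e3⟩ := h₁.1 x hax
        rw [Ioi_inter_Iio] at e2
        rw [Ioi_inter_Ioi' hax.le] at e3
        refine ⟨y, .inl hy, e1, ?_, ?_⟩
        · rwa [Ioo_inter_Iio' hxz.le, union_inter_Iio_left ht hy]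
        · rw [Ioo_inter_Ioi' hax.le, union_inter_Ioi_left ht hy]
          exact ih (hvw.mono hxv hwz.le) (fun p hp => ht p hp.1) e3 h₂'
      · obtain ⟨y, hy, e1, e2, e3⟩ := h₂.1 x hxz
        rw [Iio_inter_Iio' hxz.le] at e2
        rw [inter_comm, Ioi_inter_Iio] at e3
        refine ⟨y, .inr hy, e1, ?_, ?_⟩
        · rw [Ioo_inter_Iio' hxz.le, union_inter_Iio_right ht hy]
          exact ih (huv.mono hau.le hxv.le) (fun p hp q hq => ht p hp q hq.1) h₁' e2
        · rwa [Ioo_inter_Ioi' hax.le, union_inter_Ioi_right ht hy]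
    · rintro y (hy | hy)
      · obtain ⟨x, hx, e1, e2, e3⟩ := h₁.2 y hy
        rw [Ioi_inter_Iio] at e2
        rw [Ioi_inter_Ioi' (le_of_lt hx)] at e3
        obtain ⟨x', hax, hxu, d1, d2, d3⟩ := hup x hx
        have hxz : x' < z := hxu.trans (huv.lt.trans (hvw.lt.trans hwz))
        refine ⟨x', ⟨hax, hxz⟩, e1.trans d1, ?_, ?_⟩
        · rw [Ioo_inter_Iio' hxz.le, union_inter_Iio_left ht hy, e2, d2]
        · rw [Ioo_inter_Ioi' hax.le, union_inter_Ioi_left ht hy]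
          exact (ih (huv.mono hxu.le (hvw.lt.trans hwz).le) (fun p hp => ht p hp.1)
            (d3.symm.trans e3.symm) h₂').symm
      · obtain ⟨x, hx, e1, e2, e3⟩ := h₂.2 y hy
        rw [Iio_inter_Iio' (le_of_lt hx)] at e2
        rw [inter_comm (Iio z), Ioi_inter_Iio] at e3
        obtain ⟨x', hwx, hxz, d1, d2, d3⟩ := hdn x hx
        have hax : a < x' := (hau.trans (huv.lt.trans hvw.lt)).trans hwx
        refine ⟨x', ⟨hax, hxz⟩, e1.trans d1, ?_, ?_⟩
        · rw [Ioo_inter_Iio' hxz.le, union_inter_Iio_right ht hy]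
          exact (ih (hvw.mono (hau.trans huv.lt).le hwx.le) (fun p hp q hq => ht p hp q hq.1)
            h₁' (d3.symm.trans e2.symm)).symm
        · rw [Ioo_inter_Ioi' hax.le, union_inter_Ioi_right ht hy, e3, d2]

end RankType

/-- A property of tuples in colored linear orders that is defined by a single formula. -/
def Expressible {ι α : Type}
    (R : ∀ (X : Type) [LinearOrder X], (ι → Set X) → (α → X) → Prop) : Prop :=
  ∃ φ : (CLOLang ι).Formula α, ∀ (X : Type) [LinearOrder X] (c : ι → Set X) (v : α → X),
    Sat X c φ v ↔ R X c v

namespace Expressible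

variable {ι α : Type}

theorem sat (φ : (CLOLang ι).Formula α) : Expressible fun X [LinearOrder X] c v => Sat X c φ v :=
  ⟨φ, fun _ _ _ _ => Iff.rfl⟩

theorem lt (i j : α) : Expressible (ι := ι) fun _ [LinearOrder _] _ v => v i < v j := by
  refine ⟨Relations.formula₂ (L := CLOLang ι) CLORel.lt (Term.var i) (Term.var j), ?_⟩
  intro X _ c v
  let := CLOStr ι X c
  exact Formula.realize_rel₂

theorem color (k : ι) (i : α) : Expressible (ι := ι) fun _ [LinearOrder _] c v => v i ∈ c k := by
  refine ⟨Relations.formula₁ (L := CLOLang ι) (CLORel.color k) (Term.var i), ?_⟩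
  intro X _ c v
  let := CLOStr ι X c
  exact Formula.realize_rel₁

theorem const (p : Prop) : Expressible (ι := ι) (α := α) fun _ [LinearOrder _] _ _ => p := by
  by_cases hp : p
  · exact ⟨⊤, fun X _ c v => by simp only [hp, iff_true]; exact fun h => h⟩
  · exact ⟨⊥, fun X _ c v => by simp only [hp, iff_false]; exact fun h => h⟩

variable {R S : ∀ (X : Type) [LinearOrder X], (ι → Set X) → (α → X) → Prop}

theorem congr (h : Expressible R)
    (e : ∀ (X : Type) [LinearOrder X] (c : ι → Set X) (v : α → X), R X c v ↔ S X c v) :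
    Expressible S :=
  h.imp fun _ hφ X _ c v => (hφ X c v).trans (e X c v)

theorem imp (hR : Expressible R) (hS : Expressible S) :
    Expressible fun X [LinearOrder X] c v => R X c v → S X c v := by
  obtain ⟨φ, hφ⟩ := hR
  obtain ⟨ψ, hψ⟩ := hS
  exact ⟨φ.imp ψ, fun X _ c v => imp_congr (hφ X c v) (hψ X c v)⟩

theorem not (hR : Expressible R) : Expressible fun X [LinearOrder X] c v => ¬ R X c v :=
  hR.imp (const False)

theorem and (hR : Expressible R) (hS : Expressible S) :
    Expressible fun X [LinearOrder X] c v => R X c v ∧ S X c v :=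
  (hR.imp hS.not).not.congr fun X _ c v => by tauto

theorem iff (hR : Expressible R) (hS : Expressible S) :
    Expressible fun X [LinearOrder X] c v => (R X c v ↔ S X c v) :=
  ((hR.imp hS).and (hS.imp hR)).congr fun X _ c v => by tauto

theorem forall_finite {β : Type} [Finite β]
    {R : β → ∀ (X : Type) [LinearOrder X], (ι → Set X) → (α → X) → Prop}
    (hR : ∀ b, Expressible (R b)) : Expressible fun X [LinearOrder X] c v => ∀ b, R b X c v := by
  choose φ hφ using hR
  refine ⟨Formula.iInf φ, fun X _ c v => ?_⟩
  simp only [← hφ]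
  let := CLOStr ι X c
  exact Formula.realize_iInf

theorem ex {Q : ∀ (X : Type) [LinearOrder X], (ι → Set X) → (α → X) → X → Prop}
    (hQ : Expressible (α := α ⊕ Unit) fun X [LinearOrder X] c v =>
      Q X c (fun i => v (.inl i)) (v (.inr ()))) :
    Expressible fun X [LinearOrder X] c v => ∃ x, Q X c v x := by
  obtain ⟨φ, hφ⟩ := hQ
  refine ⟨Formula.iExs Unit φ, fun X _ c v => ?_⟩
  let := CLOStr ι X c
  refine (Formula.realize_iExs (φ := φ) (v := v)).trans ⟨?_, ?_⟩
  · rintro ⟨x, hx⟩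
    exact ⟨x (), (hφ X c _).1 hx⟩
  · rintro ⟨x, hx⟩
    exact ⟨fun _ => x, (hφ X c (Sum.elim v fun _ => x)).2 hx⟩

theorem all {Q : ∀ (X : Type) [LinearOrder X], (ι → Set X) → (α → X) → X → Prop}
    (hQ : Expressible (α := α ⊕ Unit) fun X [LinearOrder X] c v =>
      Q X c (fun i => v (.inl i)) (v (.inr ()))) :
    Expressible fun X [LinearOrder X] c v => ∀ x, Q X c v x :=
  (ex (Q := fun X _ c v x => ¬ Q X c v x) hQ.not).not.congr fun _ _ _ _ => not_exists_not

theorem relabel {β : Type} (hR : Expressible R) (r : α → β) :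
    Expressible fun X [LinearOrder X] c (v : β → X) => R X c fun i => v (r i) := by
  obtain ⟨φ, hφ⟩ := hR
  refine ⟨φ.relabel r, fun X _ c v => ?_⟩
  let := CLOStr ι X c
  exact Formula.realize_relabel.trans (hφ X c _)

end Expressible

/-- The colors of `x` among the finitely many in `F`. -/
def colorsIn {ι X : Type} (F : Finset ι) (c : ι → Set X) (x : X) : Set F := {i | x ∈ c i}

/-- The open interval between two optional members of a tuple. -/
def between {α X : Type} [LinearOrder X] (v : α → X) (lo hi : Option α) : Set X :=
  {x | (∀ i ∈ lo, v i < x) ∧ ∀ i ∈ hi, x < v i}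

namespace Expressible

variable {ι α : Type}

theorem colorsIn_eq (F : Finset ι) (γ : Set F) (i : α) :
    Expressible fun _ [LinearOrder _] c v => colorsIn F c (v i) = γ :=
  (forall_finite fun k : F => (color k.1 i).iff (const (k ∈ γ))).congr
    fun _ _ _ _ => Set.ext_iff.symm

theorem mem_between (lo hi : Option α) (j : α) :
    Expressible (ι := ι) fun _ [LinearOrder _] _ v => v j ∈ between v lo hi := by
  refine Expressible.and (R := fun _ [LinearOrder _] _ v => ∀ i ∈ lo, v i < v j)
    (S := fun _ [LinearOrder _] _ v => ∀ i ∈ hi, v j < v i) ?_ ?_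
  · cases lo with
    | none => exact (const True).congr fun _ _ _ _ => by simp
    | some i => exact (lt i j).congr fun _ _ _ _ => by simp
  · cases hi with
    | none => exact (const True).congr fun _ _ _ _ => by simp
    | some i => exact (lt j i).congr fun _ _ _ _ => by simp

theorem rankType_between (F : Finset ι) (n : ℕ) : ∀ {α : Type} (lo hi : Option α)
    (τ : RankType (Set F) n), Expressible fun _ [LinearOrder _] c v =>
      rankType (colorsIn F c) n (between v lo hi) = τ := by
  induction n with
  | zero => exact fun _ _ _ => (const True).congr fun _ _ _ _ => iff_of_true trivial rfl
  | succ n ih =>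
    intro α lo hi (τ : Set (Set F × RankType (Set F) n × RankType (Set F) n))
    refine Expressible.congr (R := fun X [LinearOrder X] c v =>
      ∀ p : Set F × RankType (Set F) n × RankType (Set F) n,
        (∃ x, x ∈ between v lo hi ∧ colorsIn F c x = p.1 ∧
          rankType (colorsIn F c) n (between v lo hi ∩ Iio x) = p.2.1 ∧
          rankType (colorsIn F c) n (between v lo hi ∩ Ioi x) = p.2.2) ↔
        p ∈ τ) ?_ ?_
    · refine forall_finite fun p => Expressible.iff (ex ?_) (const _)
      refine ((mem_between (lo.map .inl) (hi.map .inl) (.inr ())).and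
        ((colorsIn_eq F p.1 (.inr ())).and
        ((ih (lo.map .inl) (some (.inr ())) p.2.1).and
        (ih (some (.inr ())) (hi.map .inl) p.2.2)))).congr fun X _ c v => ?_
      have h0 : between v (lo.map .inl) (hi.map .inl) =
          between (fun i => v (.inl i)) lo hi := by
        simp [between]
      by_cases hx : v (.inr ()) ∈ between (fun i => v (.inl i)) lo hi
      · have h1 : between v (lo.map .inl) (some (.inr ())) =
            between (fun i => v (.inl i)) lo hi ∩ Iio (v (.inr ())) := by
          ext y
          simp only [between, Option.mem_map, Option.mem_some_iff, mem_ofPred_eq, mem_inter_iff,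
            mem_Iio, forall_exists_index, and_imp, forall_apply_eq_imp_iff₂, forall_eq'] at hx ⊢
          exact ⟨fun h => ⟨⟨h.1, fun i hi => h.2.trans (hx.2 i hi)⟩, h.2⟩,
            fun h => ⟨h.1.1, h.2⟩⟩
        have h2 : between v (some (.inr ())) (hi.map .inl) =
            between (fun i => v (.inl i)) lo hi ∩ Ioi (v (.inr ())) := by
          ext y
          simp only [between, Option.mem_map, Option.mem_some_iff, mem_ofPred_eq, mem_inter_iff,
            mem_Ioi, forall_exists_index, and_imp, forall_apply_eq_imp_iff₂, forall_eq'] at hx ⊢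
          exact ⟨fun h => ⟨⟨fun i hi => (hx.1 i hi).trans h.1, h.2⟩, h.1⟩,
            fun h => ⟨h.2, h.1.2⟩⟩
        rw [h0, h1, h2]
      · rw [h0]
        exact iff_of_false (fun h => hx h.1) (fun h => hx h.1)
    · intro X _ c v
      refine Iff.trans ?_ rankType_succ_eq.symm
      simp only [Prod.ext_iff]

theorem rankType_Iio (F : Finset ι) (n : ℕ) (τ : RankType (Set F) n) (i : α) :
    Expressible fun _ [LinearOrder _] c v => rankType (colorsIn F c) n (Iio (v i)) = τ :=
  (rankType_between F n none (some i) τ).congr fun X _ c v => by simp [between, Iio]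

theorem rankType_Ioi (F : Finset ι) (n : ℕ) (τ : RankType (Set F) n) (i : α) :
    Expressible fun _ [LinearOrder _] c v => rankType (colorsIn F c) n (Ioi (v i)) = τ :=
  (rankType_between F n (some i) none τ).congr fun X _ c v => by simp [between, Ioi]

theorem rankType_Ioo (F : Finset ι) (n : ℕ) (τ : RankType (Set F) n) (i j : α) :
    Expressible fun _ [LinearOrder _] c v => rankType (colorsIn F c) n (Ioo (v i) (v j)) = τ :=
  (rankType_between F n (some i) (some j) τ).congr fun X _ c v => by simp [between, Ioo]

/-- If having value `τ` is expressible for two functions with values in a finite type, then so is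
having equal values. -/
theorem eq_of_finite {T : Type} [Finite T]
    {p q : ∀ (X : Type) [LinearOrder X], (ι → Set X) → (α → X) → T}
    (hp : ∀ τ, Expressible fun X [LinearOrder X] c v => p X c v = τ)
    (hq : ∀ τ, Expressible fun X [LinearOrder X] c v => q X c v = τ) :
    Expressible fun X [LinearOrder X] c v => p X c v = q X c v :=
  (forall_finite fun τ => (hp τ).imp (hq τ)).congr fun _ _ _ _ =>
    ⟨fun h => (h _ rfl).symm, fun h _ hτ => h ▸ hτ⟩

theorem downBound (F : Finset ι) (n : ℕ) (i j : α) :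
    Expressible fun _ [LinearOrder _] c v => DownBound (colorsIn F c) n (v i) (v j) := by
  refine all (Q := fun X [LinearOrder X] c v x => x < v j → ∃ y, v i < y ∧ y < v j ∧
    colorsIn F c x = colorsIn F c y ∧
    rankType (colorsIn F c) n (Ioo x (v j)) = rankType (colorsIn F c) n (Ioo y (v j)) ∧
    rankType (colorsIn F c) n (Iio x) = rankType (colorsIn F c) n (Iio y)) ?_
  refine (lt (Sum.inr ()) (Sum.inl j)).imp (ex ?_)
  exact (lt (Sum.inl (Sum.inl i)) (Sum.inr ())).and <|
    (lt (Sum.inr ()) (Sum.inl (Sum.inl j))).and <|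
    (eq_of_finite (fun γ => colorsIn_eq F γ (Sum.inl (Sum.inr ())))
      (fun γ => colorsIn_eq F γ (Sum.inr ()))).and <|
    (eq_of_finite (fun τ => rankType_Ioo F n τ (Sum.inl (Sum.inr ())) (Sum.inl (Sum.inl j)))
      (fun τ => rankType_Ioo F n τ (Sum.inr ()) (Sum.inl (Sum.inl j)))).and
    (eq_of_finite (fun τ => rankType_Iio F n τ (Sum.inl (Sum.inr ())))
      (fun τ => rankType_Iio F n τ (Sum.inr ())))

theorem upBound (F : Finset ι) (n : ℕ) (i j : α) :
    Expressible fun _ [LinearOrder _] c v => UpBound (colorsIn F c) n (v i) (v j) := by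
  refine all (Q := fun X [LinearOrder X] c v x => v i < x → ∃ y, v i < y ∧ y < v j ∧
    colorsIn F c x = colorsIn F c y ∧
    rankType (colorsIn F c) n (Ioo (v i) x) = rankType (colorsIn F c) n (Ioo (v i) y) ∧
    rankType (colorsIn F c) n (Ioi x) = rankType (colorsIn F c) n (Ioi y)) ?_
  refine (lt (Sum.inl i) (Sum.inr ())).imp (ex ?_)
  exact (lt (Sum.inl (Sum.inl i)) (Sum.inr ())).and <|
    (lt (Sum.inr ()) (Sum.inl (Sum.inl j))).and <|
    (eq_of_finite (fun γ => colorsIn_eq F γ (Sum.inl (Sum.inr ())))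
      (fun γ => colorsIn_eq F γ (Sum.inr ()))).and <|
    (eq_of_finite (fun τ => rankType_Ioo F n τ (Sum.inl (Sum.inl i)) (Sum.inl (Sum.inr ())))
      (fun τ => rankType_Ioo F n τ (Sum.inl (Sum.inl i)) (Sum.inr ()))).and
    (eq_of_finite (fun τ => rankType_Ioi F n τ (Sum.inl (Sum.inr ())))
      (fun τ => rankType_Ioi F n τ (Sum.inr ())))

end Expressible

/-- Every nonempty parameter-free definable subset is unbounded in both directions. -/
def DefinablyUnbounded (ι X : Type) [LinearOrder X] (c : ι → Set X) : Prop :=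
  ∀ φ : (CLOLang ι).Formula Unit, (∃ x, Sat X c φ fun _ => x) →
    ∀ a, (∃ x, a < x ∧ Sat X c φ fun _ => x) ∧ ∃ x, x < a ∧ Sat X c φ fun _ => x

theorem definablyUnbounded_of_convex {ι X : Type} [LinearOrder X] [Nontrivial X] {c : ι → Set X}
    (h : ∀ φ : (CLOLang ι).Formula Unit, (FmlSet ι X c φ).OrdConnected →
      FmlSet ι X c φ = ∅ ∨ FmlSet ι X c φ = Set.univ) : DefinablyUnbounded ι X c := by
  have key : ∀ {R : ∀ (X : Type) [LinearOrder X], (ι → Set X) → (Unit → X) → Prop},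
      Expressible R → OrdConnected {x | R X c fun _ => x} →
      (∃ x, R X c fun _ => x) → ∀ x, R X c fun _ => x := by
    rintro R ⟨φ, hφ⟩ hc ⟨x, hx⟩ y
    have e : FmlSet ι X c φ = {x | R X c fun _ => x} := Set.ext fun x => hφ X c _
    have hx' : x ∈ FmlSet ι X c φ := e ▸ hx
    have hy : y ∈ FmlSet ι X c φ := by
      rcases h φ (e ▸ hc) with h0 | h0
      · simp [h0] at hx'
      · simp [h0]
    rwa [e] at hy
  have hmax : ∀ a : X, ∃ b, a < b := by
    by_contra! hcon
    obtain ⟨a, ha⟩ := hcon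
    obtain ⟨b, hb⟩ := exists_ne a
    have := key (R := fun X [LinearOrder X] _ v => ∀ y, ¬ v () < y)
      (.all (.not (.lt (Sum.inl ()) (Sum.inr ()))))
      ⟨fun x hx y hy z hz w hw => hx w (hz.1.trans_lt hw)⟩ ⟨a, fun y => (ha y).not_gt⟩ b a
    exact this (lt_of_le_of_ne (ha b) hb)
  have hmin : ∀ a : X, ∃ b, b < a := by
    by_contra! hcon
    obtain ⟨a, ha⟩ := hcon
    obtain ⟨b, hb⟩ := exists_ne a
    have := key (R := fun X [LinearOrder X] _ v => ∀ y, ¬ y < v ())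
      (.all (.not (.lt (Sum.inr ()) (Sum.inl ()))))
      ⟨fun x hx y hy z hz w hw => hy w (hw.trans_le hz.2)⟩ ⟨a, fun y => (ha y).not_gt⟩ b a
    exact this (lt_of_le_of_ne' (ha b) hb)
  rintro φ ⟨x, hx⟩ a
  have hφ := Expressible.sat φ
  constructor
  · obtain ⟨b, hb⟩ := hmax a
    obtain ⟨y, hy, hy'⟩ := key
      (R := fun X [LinearOrder X] c v => ∃ y, ¬ y < v () ∧ Sat X c φ fun _ => y)
      (.ex (.and (.not (.lt (Sum.inr ()) (Sum.inl ()))) (hφ.relabel fun _ => Sum.inr ())))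
      ⟨fun x hx y hy z hz => hy.imp fun w hw => ⟨fun h => hw.1 (h.trans_le hz.2), hw.2⟩⟩
      ⟨x, x, lt_irrefl x, hx⟩ b
    exact ⟨y, hb.trans_le (not_lt.1 hy), hy'⟩
  · obtain ⟨b, hb⟩ := hmin a
    obtain ⟨y, hy, hy'⟩ := key
      (R := fun X [LinearOrder X] c v => ∃ y, ¬ v () < y ∧ Sat X c φ fun _ => y)
      (.ex (.and (.not (.lt (Sum.inl ()) (Sum.inr ()))) (hφ.relabel fun _ => Sum.inr ())))
      ⟨fun x hx y hy z hz => hx.imp fun w hw => ⟨fun h => hw.1 (hz.1.trans_lt h), hw.2⟩⟩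
      ⟨x, x, lt_irrefl x, hx⟩ b
    exact ⟨y, (not_lt.1 hy).trans_lt hb, hy'⟩

section Transfer

variable {ι X Y : Type} [LinearOrder X] [LinearOrder Y] {c : ι → Set X} {d : ι → Set Y}

theorem cloEquiv_iff : CLOEquiv ι X c Y d ↔
    ∀ φ : (CLOLang ι).Sentence, Sat X c φ Empty.elim ↔ Sat Y d φ Empty.elim := by
  let := CLOStr ι X c
  let := CLOStr ι Y d
  refine elementarilyEquivalent_iff.trans (forall_congr' fun φ => ?_)
  rw [Subsingleton.elim (Empty.elim : Empty → X) default,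
    Subsingleton.elim (Empty.elim : Empty → Y) default]
  exact Iff.rfl

theorem CLOEquiv.expressible (h : CLOEquiv ι X c Y d)
    {R : ∀ (X : Type) [LinearOrder X], (ι → Set X) → (Empty → X) → Prop} (hR : Expressible R) :
    R X c Empty.elim ↔ R Y d Empty.elim := by
  obtain ⟨φ, hφ⟩ := hR
  rw [← hφ, ← hφ]
  exact cloEquiv_iff.1 h φ

theorem CLOEquiv.symm (h : CLOEquiv ι X c Y d) : CLOEquiv ι Y d X c :=
  cloEquiv_iff.2 fun φ => (cloEquiv_iff.1 h φ).symm

theorem CLOEquiv.trans {Z : Type} [LinearOrder Z] {e : ι → Set Z} (h : CLOEquiv ι X c Y d)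
    (h' : CLOEquiv ι Y d Z e) : CLOEquiv ι X c Z e :=
  cloEquiv_iff.2 fun φ => (cloEquiv_iff.1 h φ).trans (cloEquiv_iff.1 h' φ)

theorem DefinablyUnbounded.transfer (hX : DefinablyUnbounded ι X c) (h : CLOEquiv ι X c Y d) :
    DefinablyUnbounded ι Y d := by
  intro φ
  have hφ := Expressible.sat φ
  refine (h.expressible (R := fun X [LinearOrder X] c _ => (∃ x, Sat X c φ fun _ => x) →
    ∀ a, (∃ x, a < x ∧ Sat X c φ fun _ => x) ∧ ∃ x, x < a ∧ Sat X c φ fun _ => x) ?_).1 (hX φ)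
  refine .imp (.ex (hφ.relabel fun _ => Sum.inr ())) (.all (.and (.ex ?_) (.ex ?_)))
  · exact .and (.lt (Sum.inl (Sum.inr ())) (Sum.inr ())) (hφ.relabel fun _ => Sum.inr ())
  · exact .and (.lt (Sum.inr ()) (Sum.inl (Sum.inr ()))) (hφ.relabel fun _ => Sum.inr ())

end Transfer

namespace DefinablyUnbounded

variable {ι X : Type} [LinearOrder X] {c : ι → Set X}
  {R : ∀ (X : Type) [LinearOrder X], (ι → Set X) → (Unit → X) → Prop}

theorem exists_gt (h : DefinablyUnbounded ι X c) (hR : Expressible R)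
    (hx : ∃ x, R X c fun _ => x) (a : X) : ∃ x, a < x ∧ R X c fun _ => x := by
  obtain ⟨φ, hφ⟩ := hR
  simp only [← hφ] at hx ⊢
  exact (h φ hx a).1

theorem exists_lt (h : DefinablyUnbounded ι X c) (hR : Expressible R)
    (hx : ∃ x, R X c fun _ => x) (a : X) : ∃ x, x < a ∧ R X c fun _ => x := by
  obtain ⟨φ, hφ⟩ := hR
  simp only [← hφ] at hx ⊢
  exact (h φ hx a).2

theorem noMaxOrder (h : DefinablyUnbounded ι X c) : NoMaxOrder X :=
  ⟨fun a => (h.exists_gt (.const True) ⟨a, trivial⟩ a).imp fun _ => And.left⟩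

theorem noMinOrder (h : DefinablyUnbounded ι X c) : NoMinOrder X :=
  ⟨fun a => (h.exists_lt (.const True) ⟨a, trivial⟩ a).imp fun _ => And.left⟩

theorem exists_downBound (h : DefinablyUnbounded ι X c) (F : Finset ι) (n : ℕ)
    (hR : Expressible R) (hx : ∃ x, R X c fun _ => x) (w : X) :
    ∃ z, w < z ∧ DownBound (colorsIn F c) n w z ∧ R X c fun _ => z := by
  by_contra! hcon
  have := h.noMinOrder
  obtain ⟨z, hz⟩ := hx
  obtain ⟨v, hv, hvz⟩ := _root_.exists_downBound (colorsIn F c) n z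
  obtain ⟨d, hd, hd'⟩ := h.exists_lt (R := fun X [LinearOrder X] c v => ∀ z, v () < z →
      DownBound (colorsIn F c) n (v ()) z → ¬ R X c fun _ => z)
    (.all (.imp (.lt (Sum.inl ()) (Sum.inr ())) (.imp (.downBound F n (Sum.inl ()) (Sum.inr ()))
      (.not (hR.relabel fun _ => Sum.inr ()))))) ⟨w, hcon⟩ v
  exact hd' z (hd.trans hv) (hvz.mono hv le_rfl hd.le) hz

theorem exists_upBound (h : DefinablyUnbounded ι X c) (F : Finset ι) (n : ℕ)
    (hR : Expressible R) (hx : ∃ x, R X c fun _ => x) (w : X) :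
    ∃ a, a < w ∧ UpBound (colorsIn F c) n a w ∧ R X c fun _ => a := by
  by_contra! hcon
  have := h.noMaxOrder
  obtain ⟨z, hz⟩ := hx
  obtain ⟨v, hv, hvz⟩ := _root_.exists_upBound (colorsIn F c) n z
  obtain ⟨d, hd, hd'⟩ := h.exists_gt (R := fun X [LinearOrder X] c v => ∀ a, a < v () →
      UpBound (colorsIn F c) n a (v ()) → ¬ R X c fun _ => a)
    (.all (.imp (.lt (Sum.inr ()) (Sum.inl ())) (.imp (.upBound F n (Sum.inr ()) (Sum.inl ()))
      (.not (hR.relabel fun _ => Sum.inr ()))))) ⟨w, hcon⟩ v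
  exact hd' z (hv.trans hd) (hvz.mono hv le_rfl hd.le) hz

theorem exists_farBelow_right (h : DefinablyUnbounded ι X c) (F : Finset ι) (n : ℕ)
    (hR : Expressible R) (hx : ∃ x, R X c fun _ => x) (a : X) :
    ∃ z, FarBelow (colorsIn F c) n a z ∧ R X c fun _ => z := by
  have := h.noMaxOrder
  induction n generalizing R a with
  | zero => exact h.exists_gt hR hx a
  | succ n ih =>
    obtain ⟨u, hu, hau⟩ := _root_.exists_upBound (colorsIn F c) n a
    obtain ⟨v, hv, -⟩ := ih (.const True) ⟨a, trivial⟩ u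
    obtain ⟨w, hw, -⟩ := ih (.const True) ⟨a, trivial⟩ v
    obtain ⟨z, hz, hwz, hRz⟩ := h.exists_downBound F n hR hx w
    exact ⟨z, ⟨u, v, w, hu, hau, hv, hw, hz, hwz⟩, hRz⟩

theorem exists_farBelow_left (h : DefinablyUnbounded ι X c) (F : Finset ι) (n : ℕ)
    (hR : Expressible R) (hx : ∃ x, R X c fun _ => x) (z : X) :
    ∃ a, FarBelow (colorsIn F c) n a z ∧ R X c fun _ => a := by
  have := h.noMinOrder
  induction n generalizing R z with
  | zero => exact h.exists_lt hR hx z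
  | succ n ih =>
    obtain ⟨w, hw, hwz⟩ := _root_.exists_downBound (colorsIn F c) n z
    obtain ⟨v, hv, -⟩ := ih (.const True) ⟨z, trivial⟩ w
    obtain ⟨u, hu, -⟩ := ih (.const True) ⟨z, trivial⟩ v
    obtain ⟨a, ha, hau, hRa⟩ := h.exists_upBound F n hR hx u
    exact ⟨a, ⟨u, v, w, ha, hau, hu, hv, hw, hwz⟩, hRa⟩

end DefinablyUnbounded

/-- The part of a lexicographic sum lying over a set of indices. -/
def sumOver {J : Type} (A : J → Type) (S : Set J) : Set (Σₗ j, A j) := {p | (ofLex p).1 ∈ S}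

theorem toLex_mem_sumOver {J : Type} {A : J → Type} {S : Set J} {j : J} {a : A j} :
    (toLex ⟨j, a⟩ : Σₗ j, A j) ∈ sumOver A S ↔ j ∈ S := Iff.rfl

section LexSum

variable {J : Type} [LinearOrder J] {A : J → Type} [∀ j, LinearOrder (A j)]

theorem toLex_lt_toLex {j k : J} {a : A j} {b : A k} :
    (toLex ⟨j, a⟩ : Σₗ j, A j) < toLex ⟨k, b⟩ ↔ j < k ∨ ∃ h : j = k, h ▸ a < b :=
  Sigma.Lex.lt_def

theorem toLex_lt_toLex_same {j : J} {a b : A j} :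
    (toLex ⟨j, a⟩ : Σₗ j, A j) < toLex ⟨j, b⟩ ↔ a < b := by
  simp [toLex_lt_toLex]

theorem toLex_lt_toLex_of_lt {j k : J} (h : j < k) (a : A j) (b : A k) :
    (toLex ⟨j, a⟩ : Σₗ j, A j) < toLex ⟨k, b⟩ := toLex_lt_toLex.2 (.inl h)

theorem index_le_of_toLex_lt {j k : J} {a : A j} {b : A k}
    (h : (toLex ⟨j, a⟩ : Σₗ j, A j) < toLex ⟨k, b⟩) : j ≤ k := by
  rcases toLex_lt_toLex.1 h with h | ⟨h, -⟩
  exacts [h.le, h.le]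

theorem image_toLex_Ioo {j : J} (a x : A j) :
    (fun b => (toLex ⟨j, b⟩ : Σₗ j, A j)) '' Ioo a x = Ioo (toLex ⟨j, a⟩) (toLex ⟨j, x⟩) := by
  ext p
  constructor
  · rintro ⟨b, hb, rfl⟩
    exact ⟨toLex_lt_toLex_same.2 hb.1, toLex_lt_toLex_same.2 hb.2⟩
  · rintro ⟨h1, h2⟩
    obtain ⟨⟨k, b⟩, rfl⟩ := toLex.surjective p
    obtain rfl := (index_le_of_toLex_lt h1).antisymm (index_le_of_toLex_lt h2)
    exact ⟨b, ⟨toLex_lt_toLex_same.1 h1, toLex_lt_toLex_same.1 h2⟩, rfl⟩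

theorem Ioo_toLex_inter_sumOver {S : Set J} {j : J} (hj : j ∈ S) (a x : A j) :
    Ioo (toLex ⟨j, a⟩) (toLex ⟨j, x⟩) ∩ sumOver A S =
      (fun b => (toLex ⟨j, b⟩ : Σₗ j, A j)) '' Ioo a x := by
  rw [image_toLex_Ioo, inter_eq_left, ← image_toLex_Ioo]
  rintro _ ⟨b, -, rfl⟩
  exact hj

/-- An interval with endpoints in different summands, cut just below the upper summand. -/
theorem Ioo_toLex_cut_right {S : Set J} {j k : J} (hk : k ∈ S) (hjk : j < k) (a : A j) (y : A k) :
    Ioo (toLex ⟨j, a⟩) (toLex ⟨k, y⟩) ∩ sumOver A S =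
      Ioi (toLex ⟨j, a⟩) ∩ sumOver A (S ∩ Iio k) ∪ Iio (toLex ⟨k, y⟩) ∩ sumOver A {k} := by
  ext p
  obtain ⟨⟨l, b⟩, rfl⟩ := toLex.surjective p
  simp only [mem_inter_iff, mem_union, mem_Ioo, mem_Ioi, mem_Iio, toLex_mem_sumOver,
    mem_singleton_iff]
  constructor
  · rintro ⟨⟨h1, h2⟩, h3⟩
    rcases (index_le_of_toLex_lt h2).eq_or_lt with h | h
    exacts [.inr ⟨h2, h⟩, .inl ⟨h1, h3, h⟩]
  · rintro (⟨h1, h2, h3⟩ | ⟨h1, rfl⟩)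
    exacts [⟨⟨h1, toLex_lt_toLex_of_lt h3 _ _⟩, h2⟩, ⟨⟨toLex_lt_toLex_of_lt hjk _ _, h1⟩, hk⟩]

/-- An interval with endpoints in different summands, cut just above the lower summand. -/
theorem Ioo_toLex_cut_left {S : Set J} {j k : J} (hj : j ∈ S) (hjk : j < k) (a : A j) (y : A k) :
    Ioo (toLex ⟨j, a⟩) (toLex ⟨k, y⟩) ∩ sumOver A S =
      Ioi (toLex ⟨j, a⟩) ∩ sumOver A {j} ∪ Iio (toLex ⟨k, y⟩) ∩ sumOver A (S ∩ Ioi j) := by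
  ext p
  obtain ⟨⟨l, b⟩, rfl⟩ := toLex.surjective p
  simp only [mem_inter_iff, mem_union, mem_Ioo, mem_Ioi, mem_Iio, toLex_mem_sumOver,
    mem_singleton_iff]
  constructor
  · rintro ⟨⟨h1, h2⟩, h3⟩
    rcases (index_le_of_toLex_lt h1).eq_or_lt with h | h
    exacts [.inl ⟨h1, h.symm⟩, .inr ⟨h2, h3, h⟩]
  · rintro (⟨h1, rfl⟩ | ⟨h1, h2, h3⟩)
    exacts [⟨⟨h1, toLex_lt_toLex_of_lt hjk _ _⟩, hj⟩, ⟨⟨toLex_lt_toLex_of_lt h3 _ _, h1⟩, h2⟩]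

theorem Ioi_inter_sumOver_inter_Iio (S : Set J) (p q : Σₗ j, A j) :
    Ioi p ∩ sumOver A S ∩ Iio q = Ioo p q ∩ sumOver A S := by
  rw [inter_right_comm, Ioi_inter_Iio]

theorem Iio_inter_sumOver_inter_Ioi (S : Set J) (p q : Σₗ j, A j) :
    Iio q ∩ sumOver A S ∩ Ioi p = Ioo p q ∩ sumOver A S := by
  rw [inter_right_comm, Iio_inter_Ioi]

theorem Ioi_inter_sumOver_inter_Ioi (S : Set J) {p q : Σₗ j, A j} (h : p ≤ q) :
    Ioi p ∩ sumOver A S ∩ Ioi q = Ioi q ∩ sumOver A S := by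
  rw [inter_right_comm, Ioi_inter_Ioi' h]

theorem Iio_inter_sumOver_inter_Iio (S : Set J) {p q : Σₗ j, A j} (h : p ≤ q) :
    Iio q ∩ sumOver A S ∩ Iio p = Iio p ∩ sumOver A S := by
  rw [inter_right_comm, Iio_inter_Iio' h]

end LexSum

section SumTypes

variable {ι : Type}

theorem Expressible.pointType (F : Finset ι) (n : ℕ) (γ : Set F) (τ σ : RankType (Set F) n) :
    Expressible (α := Unit) fun _ [LinearOrder _] c v => colorsIn F c (v ()) = γ ∧
      rankType (colorsIn F c) n (Iio (v ())) = τ ∧ rankType (colorsIn F c) n (Ioi (v ())) = σ :=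
  (colorsIn_eq F γ ()).and ((rankType_Iio F n τ ()).and (rankType_Ioi F n σ ()))

theorem CLOEquiv.exists_pointType {X Y : Type} [LinearOrder X] [LinearOrder Y] {c : ι → Set X}
    {d : ι → Set Y} (h : CLOEquiv ι X c Y d) (F : Finset ι) (n : ℕ) (y : Y) :
    ∃ x, colorsIn F c x = colorsIn F d y ∧
      rankType (colorsIn F c) n (Iio x) = rankType (colorsIn F d) n (Iio y) ∧
      rankType (colorsIn F c) n (Ioi x) = rankType (colorsIn F d) n (Ioi y) :=
  (h.expressible (R := fun X [LinearOrder X] c _ => ∃ x, colorsIn F c x = colorsIn F d y ∧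
      rankType (colorsIn F c) n (Iio x) = rankType (colorsIn F d) n (Iio y) ∧
      rankType (colorsIn F c) n (Ioi x) = rankType (colorsIn F d) n (Ioi y))
    (.ex ((Expressible.pointType F n _ _ _).relabel fun _ => Sum.inr ()))).2 ⟨y, rfl, rfl, rfl⟩

variable {J : Type} [LinearOrder J] {A : J → Type} [∀ j, LinearOrder (A j)]
  {cA : ∀ j, ι → Set (A j)}

theorem rankType_image_toLex (cA : ∀ j, ι → Set (A j)) (F : Finset ι) (n : ℕ) {j : J}
    (s : Set (A j)) :
    rankType (colorsIn F (sigmaColor cA)) n ((fun b => (toLex ⟨j, b⟩ : Σₗ j, A j)) '' s) =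
      rankType (colorsIn F (cA j)) n s :=
  rankType_image (fun _ _ h => toLex_lt_toLex_same.2 h) (fun _ => rfl) n s

theorem rankType_sum_halves (hU : ∀ j, DefinablyUnbounded ι (A j) (cA j))
    (hE : ∀ j k, CLOEquiv ι (A j) (cA j) (A k) (cA k)) (F : Finset ι) (n : ℕ) :
    ∀ (S : Set J) (j : J), j ∈ S → ∀ a : A j,
      rankType (colorsIn F (cA j)) n (Ioi a) =
        rankType (colorsIn F (sigmaColor cA)) n (Ioi (toLex ⟨j, a⟩) ∩ sumOver A S) ∧
      rankType (colorsIn F (cA j)) n (Iio a) =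
        rankType (colorsIn F (sigmaColor cA)) n (Iio (toLex ⟨j, a⟩) ∩ sumOver A S) := by
  induction n with
  | zero => exact fun _ _ _ _ => ⟨rfl, rfl⟩
  | succ n ih =>
    intro S j hj a
    have same : ∀ a x : A j, rankType (colorsIn F (cA j)) n (Ioo a x) =
        rankType (colorsIn F (sigmaColor cA)) n
          (Ioo (toLex ⟨j, a⟩) (toLex ⟨j, x⟩) ∩ sumOver A S) := fun a x => by
      rw [Ioo_toLex_inter_sumOver hj, rankType_image_toLex]
    rw [rankType_succ_eq_iff, rankType_succ_eq_iff]
    have up : ∀ x : A j, a < x →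
        rankType (colorsIn F (cA j)) n (Ioi a ∩ Iio x) = rankType (colorsIn F (sigmaColor cA)) n
          (Ioi (toLex ⟨j, a⟩) ∩ sumOver A S ∩ Iio (toLex ⟨j, x⟩)) ∧
        rankType (colorsIn F (cA j)) n (Ioi a ∩ Ioi x) = rankType (colorsIn F (sigmaColor cA)) n
          (Ioi (toLex ⟨j, a⟩) ∩ sumOver A S ∩ Ioi (toLex ⟨j, x⟩)) := fun x hx => by
      rw [Ioi_inter_Iio, Ioi_inter_Ioi' hx.le, Ioi_inter_sumOver_inter_Iio,
        Ioi_inter_sumOver_inter_Ioi S (toLex_lt_toLex_same.2 hx).le]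
      exact ⟨same a x, (ih S j hj x).1⟩
    have down : ∀ x : A j, x < a →
        rankType (colorsIn F (cA j)) n (Iio a ∩ Iio x) = rankType (colorsIn F (sigmaColor cA)) n
          (Iio (toLex ⟨j, a⟩) ∩ sumOver A S ∩ Iio (toLex ⟨j, x⟩)) ∧
        rankType (colorsIn F (cA j)) n (Iio a ∩ Ioi x) = rankType (colorsIn F (sigmaColor cA)) n
          (Iio (toLex ⟨j, a⟩) ∩ sumOver A S ∩ Ioi (toLex ⟨j, x⟩)) := fun x hx => by
      rw [Iio_inter_Ioi, Iio_inter_Iio' hx.le, Iio_inter_sumOver_inter_Ioi,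
        Iio_inter_sumOver_inter_Iio S (toLex_lt_toLex_same.2 hx).le]
      exact ⟨(ih S j hj x).2, same x a⟩
    refine ⟨⟨fun x hx => ⟨toLex ⟨j, x⟩, ⟨toLex_lt_toLex_same.2 hx, hj⟩, rfl, up x hx⟩, ?_⟩,
      ⟨fun x hx => ⟨toLex ⟨j, x⟩, ⟨toLex_lt_toLex_same.2 hx, hj⟩, rfl, down x hx⟩, ?_⟩⟩
    · rintro p ⟨hp, hpS⟩
      obtain ⟨⟨k, y⟩, rfl⟩ := toLex.surjective p
      replace hpS : k ∈ S := hpS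
      rcases (index_le_of_toLex_lt hp).eq_or_lt with rfl | hjk
      · have hy := toLex_lt_toLex_same.1 hp
        exact ⟨y, hy, rfl, (up y hy).1.symm, (up y hy).2.symm⟩
      · obtain ⟨z, hz, e1, e2, e3⟩ := (hU j).exists_farBelow_right F n
          (.pointType F n _ _ _) ((hE j k).exists_pointType F n y) a
        refine ⟨z, hz.lt, e1.symm, ?_, ?_⟩
        · rw [Ioi_inter_Iio, Ioi_inter_sumOver_inter_Iio, Ioo_toLex_cut_right hpS hjk]
          refine (hz.rankType_Ioo n ?_ (ih (S ∩ Iio k) j ⟨hj, hjk⟩ a).1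
            (e2.trans (ih {k} k rfl y).2)).symm
          rintro p ⟨-, -, hp⟩ q ⟨-, hq⟩
          exact Sigma.Lex.lt_def.2 (.inl (lt_of_lt_of_eq hp hq.symm))
        · rw [Ioi_inter_Ioi' hz.lt.le, Ioi_inter_sumOver_inter_Ioi S (le_of_lt hp), e3]
          exact (ih S k hpS y).1.symm
    · rintro p ⟨hp, hpS⟩
      obtain ⟨⟨k, y⟩, rfl⟩ := toLex.surjective p
      replace hpS : k ∈ S := hpS
      rcases (index_le_of_toLex_lt hp).eq_or_lt with rfl | hjk
      · have hy := toLex_lt_toLex_same.1 hp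
        exact ⟨y, hy, rfl, (down y hy).1.symm, (down y hy).2.symm⟩
      · obtain ⟨z, hz, e1, e2, e3⟩ := (hU j).exists_farBelow_left F n
          (.pointType F n _ _ _) ((hE j k).exists_pointType F n y) a
        refine ⟨z, hz.lt, e1.symm, ?_, ?_⟩
        · rw [Iio_inter_Iio' hz.lt.le, Iio_inter_sumOver_inter_Iio S (le_of_lt hp), e2]
          exact (ih S k hpS y).2.symm
        · rw [Iio_inter_Ioi, Iio_inter_sumOver_inter_Ioi, Ioo_toLex_cut_left hpS hjk]
          refine (hz.rankType_Ioo n ?_ (e3.trans (ih {k} k rfl y).1)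
            (ih (S ∩ Ioi k) j ⟨hj, hjk⟩ a).2).symm
          rintro p ⟨-, hp⟩ q ⟨-, -, hq⟩
          exact Sigma.Lex.lt_def.2 (.inl (lt_of_eq_of_lt hp hq))

theorem rankType_sum_univ (hU : ∀ j, DefinablyUnbounded ι (A j) (cA j))
    (hE : ∀ j k, CLOEquiv ι (A j) (cA j) (A k) (cA k)) (F : Finset ι) (n : ℕ) (j : J) :
    rankType (colorsIn F (cA j)) n univ = rankType (colorsIn F (sigmaColor cA)) n univ := by
  cases n with
  | zero => rfl
  | succ n =>
    have halves : ∀ (k : J) (y : A k), _ := fun k y =>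
      rankType_sum_halves hU hE F n univ k trivial y
    simp only [sumOver, mem_univ, ofPred_true, inter_univ] at halves
    rw [rankType_succ_eq_iff]
    simp only [Forth, univ_inter]
    refine ⟨fun x _ => ⟨toLex ⟨j, x⟩, trivial, rfl, (halves j x).2, (halves j x).1⟩, fun p _ => ?_⟩
    obtain ⟨⟨k, y⟩, rfl⟩ := toLex.surjective p
    obtain ⟨x, e1, e2, e3⟩ := (hE j k).exists_pointType F n y
    exact ⟨x, trivial, e1.symm, ((halves k y).2.symm.trans e2.symm),
      ((halves k y).1.symm.trans e3.symm)⟩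

end SumTypes

section TypeEquiv

/-- The points lying above the members of a tuple indexed by `D` and below the others. -/
def cut {α X : Type} [LinearOrder X] (v : α → X) (D : Set α) : Set X :=
  {x | (∀ i ∈ D, v i < x) ∧ ∀ i ∉ D, x < v i}

/-- Two tuples have the same order type, the same colors, and cuts of equal rank `n` types. -/
structure TypeEquiv {α C X Y : Type} [LinearOrder X] [LinearOrder Y] (f : X → C) (g : Y → C)
    (n : ℕ) (v : α → X) (w : α → Y) : Prop where
  lt_iff : ∀ i j, v i < v j ↔ w i < w j
  color_eq : ∀ i, f (v i) = g (w i)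
  rankType_cut : ∀ D, rankType f n (cut v D) = rankType g n (cut w D)

variable {α C X Y : Type} [LinearOrder X] [LinearOrder Y] {f : X → C} {g : Y → C} {n : ℕ}
  {v : α → X} {w : α → Y}

theorem rankType_empty (f : X → C) (g : Y → C) (n : ℕ) : rankType f n ∅ = rankType g n ∅ := by
  cases n with
  | zero => rfl
  | succ n => simp [rankType_succ_eq_iff, Forth]

/-- The rank `n` types of two sets agree above as well as below given cut points. -/
def SidesEq (f : X → C) (g : Y → C) (n : ℕ) (s : Set X) (x : X) (t : Set Y) (y : Y) : Prop :=
  rankType f n (s ∩ Iio x) = rankType g n (t ∩ Iio y) ∧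
    rankType f n (s ∩ Ioi x) = rankType g n (t ∩ Ioi y)

theorem sidesEq_of_subset_Ioi {s : Set X} {t : Set Y} {x : X} {y : Y} (hs : s ⊆ Ioi x)
    (ht : t ⊆ Ioi y) (h : rankType f n s = rankType g n t) : SidesEq f g n s x t y := by
  have hs' : s ∩ Iio x = ∅ := eq_empty_of_forall_notMem fun z hz => lt_asymm (hs hz.1) hz.2
  have ht' : t ∩ Iio y = ∅ := eq_empty_of_forall_notMem fun z hz => lt_asymm (ht hz.1) hz.2
  rw [SidesEq, hs', ht', inter_eq_left.2 hs, inter_eq_left.2 ht]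
  exact ⟨rankType_empty f g n, h⟩

theorem sidesEq_of_subset_Iio {s : Set X} {t : Set Y} {x : X} {y : Y} (hs : s ⊆ Iio x)
    (ht : t ⊆ Iio y) (h : rankType f n s = rankType g n t) : SidesEq f g n s x t y := by
  have hs' : s ∩ Ioi x = ∅ := eq_empty_of_forall_notMem fun z hz => lt_asymm (hs hz.1) hz.2
  have ht' : t ∩ Ioi y = ∅ := eq_empty_of_forall_notMem fun z hz => lt_asymm (ht hz.1) hz.2
  rw [SidesEq, hs', ht', inter_eq_left.2 hs, inter_eq_left.2 ht]
  exact ⟨h, rankType_empty f g n⟩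

theorem cut_subset_Ioi {D : Set α} {i : α} {x : X} (hi : i ∈ D) (hx : x ≤ v i) :
    cut v D ⊆ Ioi x := fun _ hz => hx.trans_lt (hz.1 i hi)

theorem cut_subset_Iio {D : Set α} {i : α} {x : X} (hi : i ∉ D) (hx : v i ≤ x) :
    cut v D ⊆ Iio x := fun _ hz => (hz.2 i hi).trans_le hx

theorem cut_adjoin_of_mem {β : Type} {r : α → β} {b : β} (hb : ∀ k, k = b ∨ ∃ i, k = r i)
    (v : β → X) {D : Set β} (hD : b ∈ D) : cut v D = cut (v ∘ r) (r ⁻¹' D) ∩ Ioi (v b) := by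
  ext z
  constructor
  · exact fun h => ⟨⟨fun i hi => h.1 _ hi, fun i hi => h.2 _ hi⟩, h.1 b hD⟩
  · rintro ⟨⟨h1, h2⟩, h3⟩
    constructor
    all_goals
      intro k hk
      obtain rfl | ⟨i, rfl⟩ := hb k
    exacts [h3, h1 i hk, absurd hD hk, h2 i hk]

theorem cut_adjoin_of_notMem {β : Type} {r : α → β} {b : β} (hb : ∀ k, k = b ∨ ∃ i, k = r i)
    (v : β → X) {D : Set β} (hD : b ∉ D) : cut v D = cut (v ∘ r) (r ⁻¹' D) ∩ Iio (v b) := by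
  ext z
  constructor
  · exact fun h => ⟨⟨fun i hi => h.1 _ hi, fun i hi => h.2 _ hi⟩, h.2 b hD⟩
  · rintro ⟨⟨h1, h2⟩, h3⟩
    constructor
    all_goals
      intro k hk
      obtain rfl | ⟨i, rfl⟩ := hb k
    exacts [absurd hk hD, h1 i hk, h3, h2 i hk]

namespace TypeEquiv

theorem symm (h : TypeEquiv f g n v w) : TypeEquiv g f n w v :=
  ⟨fun i j => (h.lt_iff i j).symm, fun i => (h.color_eq i).symm, fun D => (h.rankType_cut D).symm⟩

theorem eq_iff (h : TypeEquiv f g n v w) (i j : α) : v i = v j ↔ w i = w j := by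
  simp only [eq_iff_le_not_lt, ← not_lt, h.lt_iff]

theorem adjoin {β : Type} {r : α → β} {b : β} (hb : ∀ k, k = b ∨ ∃ i, k = r i) {v : β → X}
    {w : β → Y} (h : TypeEquiv f g (n + 1) (v ∘ r) (w ∘ r))
    (hlt : ∀ i, v (r i) < v b ↔ w (r i) < w b) (hgt : ∀ i, v b < v (r i) ↔ w b < w (r i))
    (hc : f (v b) = g (w b))
    (hs : ∀ D, SidesEq f g n (cut (v ∘ r) D) (v b) (cut (w ∘ r) D) (w b)) :
    TypeEquiv f g n v w where
  lt_iff k l := by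
    obtain rfl | ⟨i, rfl⟩ := hb k <;> obtain rfl | ⟨j, rfl⟩ := hb l
    exacts [by simp, hgt j, hlt i, h.lt_iff i j]
  color_eq k := by
    obtain rfl | ⟨i, rfl⟩ := hb k
    exacts [hc, h.color_eq i]
  rankType_cut D := by
    by_cases hD : b ∈ D
    · rw [cut_adjoin_of_mem hb v hD, cut_adjoin_of_mem hb w hD]
      exact (hs _).2
    · rw [cut_adjoin_of_notMem hb v hD, cut_adjoin_of_notMem hb w hD]
      exact (hs _).1

theorem exists_adjoin {β : Type} {r : α → β} {b : β} (hb : ∀ k, k = b ∨ ∃ i, k = r i)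
    (h : TypeEquiv f g (n + 1) v w) (x : X) : ∃ y, ∀ (v' : β → X) (w' : β → Y), v' ∘ r = v →
      v' b = x → w' ∘ r = w → w' b = y → TypeEquiv f g n v' w' := by
  by_cases hx : ∃ i, v i = x
  · obtain ⟨i, rfl⟩ := hx
    refine ⟨w i, ?_⟩
    rintro v' w' rfl hv rfl hw
    refine adjoin hb h ?_ ?_ ?_ fun D => ?_ <;> rw [hv, hw]
    · exact fun j => h.lt_iff j i
    · exact fun j => h.lt_iff i j
    · exact h.color_eq i
    · have hD := rankType_eq_of_succ n (h.rankType_cut D)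
      by_cases hi : i ∈ D
      · exact sidesEq_of_subset_Ioi (cut_subset_Ioi hi le_rfl) (cut_subset_Ioi hi le_rfl) hD
      · exact sidesEq_of_subset_Iio (cut_subset_Iio hi le_rfl) (cut_subset_Iio hi le_rfl) hD
  · push Not at hx
    have hxD : x ∈ cut v {i | v i < x} :=
      ⟨fun i hi => hi, fun i hi => lt_of_le_of_ne' (not_lt.1 hi) (hx i)⟩
    obtain ⟨y, hy, e1, e2, e3⟩ := forth_of_rankType_eq (h.rankType_cut _) x hxD
    refine ⟨y, ?_⟩
    rintro v' w' rfl rfl rfl rfl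
    refine adjoin hb h (fun i => ?_) (fun i => ?_) e1 fun D => ?_
    · exact ⟨fun hi => hy.1 i hi, fun hi => not_le.1 fun hi' => lt_asymm hi (hy.2 i hi'.not_gt)⟩
    · exact ⟨fun hi => hy.2 i hi.not_gt, fun hi => hxD.2 i fun hi' => lt_asymm hi (hy.1 i hi')⟩
    · have hD := rankType_eq_of_succ n (h.rankType_cut D)
      by_cases h1 : ∃ i ∈ D, ¬ v' (r i) < v' b
      · obtain ⟨i, hi, hi'⟩ := h1
        exact sidesEq_of_subset_Ioi (cut_subset_Ioi hi (not_lt.1 hi'))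
          (cut_subset_Ioi hi (hy.2 i hi').le) hD
      by_cases h2 : ∃ i ∉ D, v' (r i) < v' b
      · obtain ⟨i, hi, hi'⟩ := h2
        exact sidesEq_of_subset_Iio (cut_subset_Iio hi hi'.le)
          (cut_subset_Iio hi (hy.1 i hi').le) hD
      push Not at h1 h2
      obtain rfl : D = {i | v' (r i) < v' b} :=
        Set.ext fun i => ⟨h1 i, fun hi => by_contra fun hi' => (h2 i hi').not_gt hi⟩
      exact ⟨e2, e3⟩

end TypeEquiv

end TypeEquiv

section Formulas

variable {ι : Type}

theorem exists_eq_var {α : Type} (t : (CLOLang ι).Term α) : ∃ i, t = Term.var i := by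
  cases t with
  | var i => exact ⟨i, rfl⟩
  | func f _ => exact f.elim

/-- Tuples whose types agree up to a suitable rank, for sufficiently many colors, satisfy the
same instances of a formula. -/
theorem exists_rank_determining_realize {α : Type} {m : ℕ}
    (φ : (CLOLang ι).BoundedFormula α m) : ∃ (F₀ : Finset ι) (n₀ : ℕ),
      ∀ F, F₀ ⊆ F → ∀ n, n₀ ≤ n → ∀ (X Y : Type) [LinearOrder X] [LinearOrder Y] (c : ι → Set X)
        (d : ι → Set Y) (v : α → X) (w : α → Y) (xs : Fin m → X) (ys : Fin m → Y),
        TypeEquiv (colorsIn F c) (colorsIn F d) n (Sum.elim v xs) (Sum.elim w ys) →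
        ((let := CLOStr ι X c; φ.Realize v xs) ↔ (let := CLOStr ι Y d; φ.Realize w ys)) := by
  classical
  induction φ with
  | falsum => exact ⟨∅, 0, fun _ _ _ _ _ _ _ _ _ _ _ _ _ _ _ => Iff.rfl⟩
  | equal t₁ t₂ =>
    obtain ⟨i, rfl⟩ := exists_eq_var t₁
    obtain ⟨j, rfl⟩ := exists_eq_var t₂
    exact ⟨∅, 0, fun _ _ _ _ _ _ _ _ _ _ _ _ _ _ h => h.eq_iff i j⟩
  | rel R ts =>
    choose t ht using fun i => exists_eq_var (ts i)
    obtain rfl : ts = fun i => Term.var (t i) := funext ht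
    cases R with
    | lt => exact ⟨∅, 0, fun _ _ _ _ _ _ _ _ _ _ _ _ _ _ h => h.lt_iff (t 0) (t 1)⟩
    | color i =>
      refine ⟨{i}, 0, fun F hF n _ X Y _ _ c d v w xs ys h => ?_⟩
      exact Set.ext_iff.1 (h.color_eq (t 0)) ⟨i, hF (Finset.mem_singleton_self i)⟩
  | imp φ ψ ihφ ihψ =>
    obtain ⟨F₁, n₁, h₁⟩ := ihφ
    obtain ⟨F₂, n₂, h₂⟩ := ihψ
    refine ⟨F₁ ∪ F₂, max n₁ n₂, fun F hF n hn X Y _ _ c d v w xs ys h => ?_⟩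
    exact imp_congr
      (h₁ F (Finset.union_subset_left hF) n (le_of_max_le_left hn) X Y c d v w xs ys h)
      (h₂ F (Finset.union_subset_right hF) n (le_of_max_le_right hn) X Y c d v w xs ys h)
  | @all m φ ih =>
    obtain ⟨F₁, n₁, h₁⟩ := ih
    have hb : ∀ k : α ⊕ Fin (m + 1), k = Sum.inr (Fin.last m) ∨
        ∃ i : α ⊕ Fin m, k = Sum.map id Fin.castSucc i := by
      rintro (k | k)
      · exact .inr ⟨.inl k, rfl⟩
      · induction k using Fin.lastCases with
        | last => exact .inl rfl
        | cast k => exact .inr ⟨.inr k, rfl⟩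
    have hsnoc : ∀ {X : Type} (v : α → X) (xs : Fin m → X) (x : X),
        Sum.elim v (Fin.snoc xs x : Fin (m + 1) → X) ∘ Sum.map id Fin.castSucc =
          Sum.elim v xs := by
      intro X v xs x
      ext (k | k) <;> simp
    have forth : ∀ F, F₁ ⊆ F → ∀ n, n₁ ≤ n → ∀ (X Y : Type) [LinearOrder X] [LinearOrder Y]
        (c : ι → Set X) (d : ι → Set Y) (v : α → X) (w : α → Y) (xs : Fin m → X)
        (ys : Fin m → Y),
        TypeEquiv (colorsIn F c) (colorsIn F d) (n + 1) (Sum.elim v xs) (Sum.elim w ys) →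
        (let := CLOStr ι Y d; φ.all.Realize w ys) → (let := CLOStr ι X c; φ.all.Realize v xs) := by
      intro F hF n hn X Y _ _ c d v w xs ys h hY _ x
      obtain ⟨y, hy⟩ := h.exists_adjoin hb x
      exact (h₁ F hF n hn X Y c d v w _ _ (hy _ _ (hsnoc v xs x) (by simp) (hsnoc w ys y)
        (by simp))).2 (hY y)
    refine ⟨F₁, n₁ + 1, fun F hF n hn X Y _ _ c d v w xs ys h => ?_⟩
    obtain ⟨n, rfl⟩ : ∃ k, n = k + 1 := ⟨n - 1, by omega⟩
    exact ⟨forth F hF n (by omega) Y X d c w v ys xs h.symm,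
      forth F hF n (by omega) X Y c d v w xs ys h⟩

theorem sat_iff_of_typeEquiv {α X Y : Type} [LinearOrder X] [LinearOrder Y] {c : ι → Set X}
    {d : ι → Set Y} {v : α → X} {w : α → Y}
    (h : ∀ (F : Finset ι) (n : ℕ), TypeEquiv (colorsIn F c) (colorsIn F d) n
      (Sum.elim v (default : Fin 0 → X)) (Sum.elim w (default : Fin 0 → Y)))
    (φ : (CLOLang ι).Formula α) : Sat X c φ v ↔ Sat Y d φ w := by
  obtain ⟨F, n, hφ⟩ := exists_rank_determining_realize φ
  exact hφ F subset_rfl n le_rfl X Y c d v w _ _ (h F n)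

end Formulas

section Main

variable {ι : Type}

theorem eq_empty_or_exists_ge {α X : Type} [Finite α] [LinearOrder X] (v : α → X) (D : Set α) :
    D = ∅ ∨ ∃ i ∈ D, ∀ j ∈ D, v j ≤ v i :=
  D.eq_empty_or_nonempty.imp_right fun h => Set.exists_max_image D v D.toFinite h

theorem forall_comp_lt_iff {α X Y : Type} [PartialOrder X] [Preorder Y] {e : X → Y}
    (he : StrictMono e) {v : α → X} {D : Set α} {i : α} (hi : i ∈ D)
    (hmax : ∀ j ∈ D, v j ≤ v i) (y : Y) : (∀ j ∈ D, e (v j) < y) ↔ e (v i) < y :=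
  ⟨fun h => h i hi, fun h j hj => (he.monotone (hmax j hj)).trans_lt h⟩

theorem forall_lt_comp_iff {α X Y : Type} [PartialOrder X] [Preorder Y] {e : X → Y}
    (he : StrictMono e) {v : α → X} {D : Set α} {i : α} (hi : i ∉ D)
    (hmin : ∀ j ∉ D, v i ≤ v j) (y : Y) : (∀ j ∉ D, y < e (v j)) ↔ y < e (v i) :=
  ⟨fun h => h i hi, fun h j hj => h.trans_le (he.monotone (hmin j hj))⟩

/-- For finite tuples, cuts of a tuple and of its image under a strictly monotone map are
corresponding intervals. -/
theorem cut_comp_cases {α X Y : Type} [Finite α] [LinearOrder X] [LinearOrder Y] {e : X → Y}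
    (he : StrictMono e) (v : α → X) (D : Set α) :
    (cut v D = univ ∧ cut (e ∘ v) D = univ) ∨
    (∃ a, cut v D = Ioi a ∧ cut (e ∘ v) D = Ioi (e a)) ∨
    (∃ b, cut v D = Iio b ∧ cut (e ∘ v) D = Iio (e b)) ∨
    ∃ a b, cut v D = Ioo a b ∧ cut (e ∘ v) D = Ioo (e a) (e b) := by
  have hlo := eq_empty_or_exists_ge v D
  have hhi : Dᶜ = ∅ ∨ ∃ i ∉ D, ∀ j ∉ D, v i ≤ v j :=
    eq_empty_or_exists_ge (X := Xᵒᵈ) v Dᶜ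
  rcases hlo with rfl | ⟨i, hi, hmax⟩
  · rcases hhi with h | ⟨j, hj, hmin⟩
    · have : IsEmpty α := by simpa [univ_eq_empty_iff] using h
      exact .inl ⟨by simp [cut], by simp [cut]⟩
    · refine .inr (.inr (.inl ⟨v j, ?_, ?_⟩))
      · ext x
        exact (and_iff_right (by simp)).trans (forall_lt_comp_iff strictMono_id hj hmin x)
      · ext x
        exact (and_iff_right (by simp)).trans (forall_lt_comp_iff he hj hmin x)
  · rcases hhi with h | ⟨j, hj, hmin⟩
    · obtain rfl := compl_empty_iff.1 h
      refine .inr (.inl ⟨v i, ?_, ?_⟩)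
      · ext x
        exact (and_iff_left (by simp)).trans (forall_comp_lt_iff strictMono_id hi hmax x)
      · ext x
        exact (and_iff_left (by simp)).trans (forall_comp_lt_iff he hi hmax x)
    · refine .inr (.inr (.inr ⟨v i, v j, ?_, ?_⟩))
      · ext x
        exact and_congr (forall_comp_lt_iff strictMono_id hi hmax x)
          (forall_lt_comp_iff strictMono_id hj hmin x)
      · ext x
        exact and_congr (forall_comp_lt_iff he hi hmax x) (forall_lt_comp_iff he hj hmin x)

variable {J : Type} [LinearOrder J] {A : J → Type} [∀ j, LinearOrder (A j)]
  {cA : ∀ j, ι → Set (A j)}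

theorem typeEquiv_toLex (hU : ∀ j, DefinablyUnbounded ι (A j) (cA j))
    (hE : ∀ j k, CLOEquiv ι (A j) (cA j) (A k) (cA k)) (F : Finset ι) (n : ℕ) (j : J)
    {α : Type} [Finite α] (v : α → A j) :
    TypeEquiv (colorsIn F (cA j)) (colorsIn F (sigmaColor cA)) n v
      ((fun a => (toLex ⟨j, a⟩ : Σₗ j, A j)) ∘ v) := by
  have he : StrictMono fun a => (toLex ⟨j, a⟩ : Σₗ j, A j) := fun _ _ => toLex_lt_toLex_same.2
  refine ⟨fun _ _ => toLex_lt_toLex_same.symm, fun _ => rfl, fun D => ?_⟩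
  have halves := rankType_sum_halves hU hE F n univ j trivial
  simp only [sumOver, mem_univ, ofPred_true, inter_univ] at halves
  rcases cut_comp_cases he v D with ⟨h1, h2⟩ | ⟨a, h1, h2⟩ | ⟨b, h1, h2⟩ | ⟨a, b, h1, h2⟩ <;>
    rw [h1, h2]
  · exact rankType_sum_univ hU hE F n j
  · exact (halves a).1
  · exact (halves b).2
  · rw [← image_toLex_Ioo, rankType_image_toLex]

theorem sat_toLex_iff (hU : ∀ j, DefinablyUnbounded ι (A j) (cA j))
    (hE : ∀ j k, CLOEquiv ι (A j) (cA j) (A k) (cA k)) (j : J) {α : Type} [Finite α]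
    (φ : (CLOLang ι).Formula α) (v : α → A j) :
    Sat (A j) (cA j) φ v ↔
      Sat (Σₗ j, A j) (sigmaColor cA) φ ((fun a => (toLex ⟨j, a⟩ : Σₗ j, A j)) ∘ v) := by
  refine sat_iff_of_typeEquiv (fun F n => ?_) φ
  have h := typeEquiv_toLex hU hE F n j (Sum.elim v (default : Fin 0 → A j))
  rwa [Sum.comp_elim, Subsingleton.elim (_ ∘ (default : Fin 0 → A j)) default] at h

theorem convex_trivial_of_isElemMap {M : Type} [LinearOrder M] {c : ι → Set M}
    (h : ∀ b : Bool, IsElemMap ι c (sigmaColor fun _ : Bool => c) fun a => toLex ⟨b, a⟩)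
    (hE : CLOEquiv ι (Σₗ _ : Bool, M) (sigmaColor fun _ => c) M c)
    (φ : (CLOLang ι).Formula Unit) (hφ : (FmlSet ι M c φ).OrdConnected) :
    FmlSet ι M c φ = ∅ ∨ FmlSet ι M c φ = Set.univ := by
  have hexp := Expressible.sat φ
  have hconv := (hE.expressible (R := fun X [LinearOrder X] c _ => ∀ x y z,
      (Sat X c φ fun _ => x) → (Sat X c φ fun _ => y) → x < z → z < y → Sat X c φ fun _ => z)
    (.all (.all (.all (.imp (hexp.relabel fun _ => Sum.inl (Sum.inl (Sum.inr ())))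
      (.imp (hexp.relabel fun _ => Sum.inl (Sum.inr ()))
      (.imp (.lt (Sum.inl (Sum.inl (Sum.inr ()))) (Sum.inr ()))
      (.imp (.lt (Sum.inr ()) (Sum.inl (Sum.inr ())))
      (hexp.relabel fun _ => Sum.inr ()))))))))).2
    fun x y z hx hy hxz hzy => hφ.out hx hy ⟨hxz.le, hzy.le⟩
  have hcopy : ∀ (b : Bool) (x : M), (Sat M c φ fun _ => x) ↔
      Sat (Σₗ _ : Bool, M) (sigmaColor fun _ => c) φ fun _ => toLex ⟨b, x⟩ := by
    intro b x
    obtain ⟨ψ, hψ⟩ := hexp.relabel (fun _ => (0 : Fin 1))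
    exact (hψ M c fun _ => x).symm.trans ((h b 1 ψ fun _ => x).trans (hψ _ _ _))
  rcases (FmlSet ι M c φ).eq_empty_or_nonempty with h0 | ⟨a, ha⟩
  · exact .inl h0
  refine .inr (eq_univ_of_forall fun b => ?_)
  have hends := hconv (toLex ⟨false, a⟩) (toLex ⟨true, a⟩)
  rcases lt_trichotomy a b with hab | rfl | hab
  · exact (hcopy false b).2 (hends _ ((hcopy _ a).1 ha) ((hcopy _ a).1 ha)
      (toLex_lt_toLex_same.2 hab) (toLex_lt_toLex_of_lt Bool.false_lt_true _ _))
  · exact ha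
  · exact (hcopy true b).2 (hends _ ((hcopy _ a).1 ha) ((hcopy _ a).1 ha)
      (toLex_lt_toLex_of_lt Bool.false_lt_true _ _) (toLex_lt_toLex_same.2 hab))

end Main

theorem stmt6 {ι : Type} [Countable ι] {M : Type} [LinearOrder M] (c : ι → Set M)
    (hM : Nontrivial M) :
    (∀ φ : (CLOLang ι).Formula Unit, (FmlSet ι M c φ).OrdConnected →
        FmlSet ι M c φ = ∅ ∨ FmlSet ι M c φ = Set.univ) ↔
      (∀ (J : Type) [LinearOrder J] [Nonempty J], ∀ (A : J → Type) [∀ j, LinearOrder (A j)],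
        ∀ cA : ∀ j, ι → Set (A j),
          (∀ j, CLOEquiv ι (A j) (cA j) M c) →
          (∀ j, IsElemMap ι (cA j) (sigmaColor cA) fun a => toLex ⟨j, a⟩) ∧
            CLOEquiv ι (Σₗ j, A j) (sigmaColor cA) M c) := by
  constructor
  · intro h J _ _ A _ cA hA
    have hE : ∀ j k, CLOEquiv ι (A j) (cA j) (A k) (cA k) := fun j k => (hA j).trans (hA k).symm
    have hU : ∀ j, DefinablyUnbounded ι (A j) (cA j) := fun j =>
      (definablyUnbounded_of_convex h).transfer (hA j).symm
    refine ⟨fun j k φ v => sat_toLex_iff hU hE j φ v, ?_⟩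
    obtain ⟨j⟩ := ‹Nonempty J›
    refine CLOEquiv.trans (CLOEquiv.symm (cloEquiv_iff.2 fun φ => ?_)) (hA j)
    rw [sat_toLex_iff hU hE j φ, Subsingleton.elim (_ ∘ Empty.elim) Empty.elim]
  · intro h φ hφ
    obtain ⟨hm, hE⟩ := h Bool (fun _ => M) (fun _ => c) fun _ => cloEquiv_iff.2 fun _ => Iff.rfl
    exact convex_trivial_of_isElemMap hm hE φ hφ
end
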